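/- arXiv:1706.03591 — 2 statements merged into one kernel-verified Lean document; each statement's English description precedes it below -/
import Mathlib

section
/- Let n ≥ k, d ≥ k, and let R ∈ ℝ^{n×d} be a random matrix whose entries are independent Gaussian random variables with mean 0 and variance 1/d. For every t ≥ 0, with probability at least 1 − exp(−t²/2), every minimizer X over 𝒳 of the k-means cost on Ψ = H R satisfies C_Φ ≤ ‖Φ − X Xᵀ Φ‖_F ≤ C_Φ + 2·√(k/d)·(√k + t) (the lower bound C_Φ ≤ ‖Φ − X Xᵀ Φ‖_F holds surely). -/
open Matrix MeasureTheory ProbabilityTheory Finset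

noncomputable section

/-- The `a × b` matrix with ones on the main diagonal and zeros elsewhere. -/
def rectId (a b : ℕ) : Matrix (Fin a) (Fin b) ℝ :=
  Matrix.of fun i j => if (i : ℕ) = (j : ℕ) then 1 else 0

/-- Frobenius norm of a real matrix. -/
def frob {a b : ℕ} (M : Matrix (Fin a) (Fin b) ℝ) : ℝ :=
  Real.sqrt (∑ i, ∑ j, (M i j) ^ 2)

/-- Euclidean norm of a vector. -/
def enorm2 {a : ℕ} (v : Fin a → ℝ) : ℝ :=
  Real.sqrt (∑ i, (v i) ^ 2)

/-- `X` is the cluster-indicator matrix of the partition of `Fin n` into the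
(nonempty) fibers of the surjective map `f : Fin n → Fin k`. -/
def IsIndicatorOf {n k : ℕ} (f : Fin n → Fin k) (X : Matrix (Fin n) (Fin k) ℝ) : Prop :=
  Function.Surjective f ∧
    ∀ i j, X i j =
      if f i = j then 1 / Real.sqrt ((Finset.univ.filter fun i' => f i' = j).card) else 0

/-- `X` is a cluster-indicator matrix of a partition into `k` nonempty clusters. -/
def IsIndicator {n k : ℕ} (X : Matrix (Fin n) (Fin k) ℝ) : Prop :=
  ∃ f : Fin n → Fin k, IsIndicatorOf f X

/-- The k-means cost of the assignment `X` on the feature matrix `M`. -/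
def kmeansCost {n k m : ℕ} (M : Matrix (Fin n) (Fin m) ℝ)
    (X : Matrix (Fin n) (Fin k) ℝ) : ℝ :=
  frob (M - X * Xᵀ * M)

/-- `X` minimizes the k-means cost on features `M` over all indicator matrices. -/
def IsOptAssign {n k m : ℕ} (M : Matrix (Fin n) (Fin m) ℝ)
    (X : Matrix (Fin n) (Fin k) ℝ) : Prop :=
  IsIndicator X ∧
    ∀ Y : Matrix (Fin n) (Fin k) ℝ, IsIndicator Y → kmeansCost M X ≤ kmeansCost M Y

/-- Law of an `n × d` random matrix with i.i.d. Gaussian entries of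
mean `0` and variance `1 / d`. -/
def gaussMeasure (n d : ℕ) : Measure (Fin n → Fin d → ℝ) :=
  Measure.pi fun _ => Measure.pi fun _ => gaussianReal 0 (d : NNReal)⁻¹

open scoped ENNReal

lemma pl_real (P Q G : ℝ → ℝ) (hP : Measurable P) (hQ : Measurable Q) (hG : Measurable G)
    (hP0 : ∀ x, 0 ≤ P x) (hQ0 : ∀ x, 0 ≤ Q x) (hG0 : ∀ x, 0 ≤ G x)
    (hP1 : ∀ x, P x ≤ 1) (hQ1 : ∀ x, Q x ≤ 1)
    (hPs : ∀ s < 1, ∃ x, s < P x) (hQs : ∀ s < 1, ∃ x, s < Q x)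
    (hconv : ∀ s, Set.OrdConnected {z | s < G z})
    (h : ∀ x y, P x * Q y ≤ G ((x + y) / 2) ^ 2) :
    (∫⁻ x, ENNReal.ofReal (P x)) + (∫⁻ x, ENNReal.ofReal (Q x)) ≤
      2 * ∫⁻ x, ENNReal.ofReal (G x) := by
  rw [lintegral_eq_lintegral_meas_lt volume (Filter.Eventually.of_forall hP0) hP.aemeasurable,
    lintegral_eq_lintegral_meas_lt volume (Filter.Eventually.of_forall hQ0) hQ.aemeasurable,
    lintegral_eq_lintegral_meas_lt volume (Filter.Eventually.of_forall hG0) hG.aemeasurable,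
    ← lintegral_const_mul' _ _ (by simp), ← lintegral_add_left]
  · refine setLIntegral_mono' measurableSet_Ioi ?_
    intro s hs
    have hs0 : 0 < s := hs
    by_cases hs1 : s < 1
    · have key : ∀ a1 a2 b1 b2, a1 ∈ {x | s < P x} → a2 ∈ {x | s < P x} → b1 ∈ {x | s < Q x} →
          b2 ∈ {x | s < Q x} → a1 ≤ a2 → b1 ≤ b2 →
          edist a1 a2 + edist b1 b2 ≤ 2 * volume {z | s < G z} := by
        intro a1 a2 b1 b2 ha1 ha2 hb1 hb2 ha hb
        have hmem : ∀ x y, x ∈ {x | s < P x} → y ∈ {x | s < Q x} →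
            (x + y) / 2 ∈ {z | s < G z} := by
          intro x y hx hy
          simp only [Set.mem_ofPred_eq] at hx hy ⊢
          have h1 := h x y
          have : s ^ 2 < G ((x + y) / 2) ^ 2 := by nlinarith
          exact lt_of_pow_lt_pow_left₀ 2 (hG0 _) this
        have hsub := (hconv s).out (hmem a1 b1 ha1 hb1) (hmem a2 b2 ha2 hb2)
        have hv := measure_mono (μ := volume) hsub
        rw [Real.volume_Icc] at hv
        calc edist a1 a2 + edist b1 b2
            = 2 * ENNReal.ofReal ((a2 + b2) / 2 - (a1 + b1) / 2) := by
              rw [edist_dist, edist_dist, Real.dist_eq, Real.dist_eq, abs_sub_comm,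
                abs_sub_comm b1, abs_of_nonneg (by linarith), abs_of_nonneg (by linarith),
                ← ENNReal.ofReal_add (by linarith) (by linarith)]
              rw [show (2 : ℝ≥0∞) = ENNReal.ofReal 2 by simp, ← ENNReal.ofReal_mul (by norm_num)]
              congr 1; ring
          _ ≤ _ := by gcongr
      have key2 : ∀ a1 a2 b1 b2, a1 ∈ {x | s < P x} → a2 ∈ {x | s < P x} → b1 ∈ {x | s < Q x} →
          b2 ∈ {x | s < Q x} →
          edist a1 a2 + edist b1 b2 ≤ 2 * volume {z | s < G z} := by
        intro a1 a2 b1 b2 ha1 ha2 hb1 hb2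
        rcases le_total a1 a2 with ha | ha <;> rcases le_total b1 b2 with hb | hb
        · exact key _ _ _ _ ha1 ha2 hb1 hb2 ha hb
        · rw [edist_comm b1]; exact key _ _ _ _ ha1 ha2 hb2 hb1 ha hb
        · rw [edist_comm a1]; exact key _ _ _ _ ha2 ha1 hb1 hb2 ha hb
        · rw [edist_comm a1, edist_comm b1]; exact key _ _ _ _ ha2 ha1 hb2 hb1 ha hb
      obtain ⟨b0, hb0⟩ := hQs s hs1
      obtain ⟨a0, ha0⟩ := hPs s hs1
      by_cases htop : 2 * volume {z | s < G z} = ⊤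
      · rw [htop]; exact le_top
      have hA : ∀ b1 b2, b1 ∈ {x | s < Q x} → b2 ∈ {x | s < Q x} →
          Metric.ediam {x | s < P x} + edist b1 b2 ≤ 2 * volume {z | s < G z} := by
        intro b1 b2 hb1 hb2
        have h1 := key2 a0 a0 b1 b2 ha0 ha0 hb1 hb2
        have hle : edist b1 b2 ≤ 2 * volume {z | s < G z} := le_trans le_add_self h1
        have hne : edist b1 b2 ≠ ⊤ := edist_ne_top _ _
        have : Metric.ediam {x | s < P x} ≤ 2 * volume {z | s < G z} - edist b1 b2 :=
          Metric.ediam_le fun a1 ha1 a2 ha2 =>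
            ENNReal.le_sub_of_add_le_right hne (key2 a1 a2 b1 b2 ha1 ha2 hb1 hb2)
        calc _ ≤ 2 * volume {z | s < G z} - edist b1 b2 + edist b1 b2 := by gcongr
          _ = _ := tsub_add_cancel_of_le hle
      have hle : Metric.ediam {x | s < P x} ≤ 2 * volume {z | s < G z} :=
        le_trans le_self_add (hA b0 b0 hb0 hb0)
      have hB : Metric.ediam {x | s < Q x} ≤
          2 * volume {z | s < G z} - Metric.ediam {x | s < P x} :=
        Metric.ediam_le fun b1 hb1 b2 hb2 =>
          ENNReal.le_sub_of_add_le_left (ne_top_of_le_ne_top htop hle) (hA b1 b2 hb1 hb2)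
      calc volume {x | s < P x} + volume {x | s < Q x}
          ≤ Metric.ediam {x | s < P x} + Metric.ediam {x | s < Q x} :=
            add_le_add (Real.volume_le_diam _) (Real.volume_le_diam _)
        _ ≤ Metric.ediam {x | s < P x} +
            (2 * volume {z | s < G z} - Metric.ediam {x | s < P x}) := by gcongr
        _ = _ := add_tsub_cancel_of_le hle
    · have e1 : {x | s < P x} = ∅ := by
        ext x; simp only [Set.mem_ofPred_eq, Set.mem_empty_iff_false, iff_false, not_lt]
        linarith [hP1 x]
      have e2 : {x | s < Q x} = ∅ := by
        ext x; simp only [Set.mem_ofPred_eq, Set.mem_empty_iff_false, iff_false, not_lt]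
        linarith [hQ1 x]
      simp [e1, e2]
  · exact Antitone.measurable fun s t hst => measure_mono fun x (hx : t < P x) => lt_of_le_of_lt hst hx

lemma pl_ennreal (p q : ℝ → ℝ≥0∞) (g : ℝ → ℝ) (hp : Measurable p) (hq : Measurable q)
    (hg : Measurable g) (hg0 : ∀ x, 0 ≤ g x) (C : ℝ) (hC : ∀ x, g x ≤ C)
    (hconv : ∀ s, Set.OrdConnected {z | s < g z}) (hIntg : ∫⁻ x, ENNReal.ofReal (g x) = 1)
    (h : ∀ x y, p x * q y ≤ ENNReal.ofReal (g ((x + y) / 2) ^ 2)) :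
    (∫⁻ x, p x) * (∫⁻ x, q x) ≤ 1 := by
  have hbd : ∀ p q : ℝ → ℝ≥0∞, (∀ x y, p x * q y ≤ ENNReal.ofReal (g ((x + y) / 2) ^ 2)) →
      (⨆ x, q x) ≠ 0 → (⨆ x, p x) ≠ ⊤ := by
    intro p q h hb
    obtain ⟨y, hy⟩ : ∃ y, q y ≠ 0 := by
      by_contra hcon
      push Not at hcon
      exact hb (by simp [hcon])
    refine ne_top_of_le_ne_top (b := ENNReal.ofReal (C ^ 2) / q y) ?_ ?_
    · exact ENNReal.div_ne_top (by simp) hy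
    · refine iSup_le fun x => ?_
      have h1 : p x * q y ≤ ENNReal.ofReal (C ^ 2) := (h x y).trans <| by
        apply ENNReal.ofReal_le_ofReal
        have := hg0 ((x+y)/2); have := hC ((x+y)/2)
        gcongr
      exact ENNReal.le_div_iff_mul_le (Or.inl hy) (Or.inr (by simp)) |>.2 h1
  by_cases hb0 : (⨆ x, q x) = 0
  · have : ∀ x, q x = 0 := by simpa using hb0
    simp [this]
  by_cases ha0 : (⨆ x, p x) = 0
  · have : ∀ x, p x = 0 := by simpa using ha0
    simp [this]
  have hat := hbd p q h hb0
  have hbt := hbd q p (fun x y => by rw [mul_comm, add_comm]; exact h y x) ha0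
  have hpa : ∀ x, p x ≤ ⨆ x, p x := fun x => le_iSup p x
  have hqb : ∀ x, q x ≤ ⨆ x, q x := fun x => le_iSup q x
  obtain ⟨a, haeq⟩ : ∃ a, a = (⨆ x, p x).toReal := ⟨_, rfl⟩
  obtain ⟨b, hbeq⟩ : ∃ a, a = (⨆ x, q x).toReal := ⟨_, rfl⟩
  have ha : 0 < a := haeq ▸ ENNReal.toReal_pos ha0 hat
  have hb : 0 < b := hbeq ▸ ENNReal.toReal_pos hb0 hbt
  have hpt : ∀ x, p x ≠ ⊤ := fun x => ne_top_of_le_ne_top hat (hpa x)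
  have hqt : ∀ x, q x ≠ ⊤ := fun x => ne_top_of_le_ne_top hbt (hqb x)
  have hsab : 0 < √(a * b) := Real.sqrt_pos.2 (by positivity)
  have hsup : ∀ (p : ℝ → ℝ≥0∞) (a : ℝ), 0 < a → (⨆ x, p x) ≠ ⊤ → (∀ x, p x ≠ ⊤) →
      a = (⨆ x, p x).toReal → ∀ s < 1, ∃ x, s < (p x).toReal / a := by
    intro p a ha hat hpt haeq s hs
    by_contra hcon
    push Not at hcon
    have h1 : (⨆ x, p x) ≤ ENNReal.ofReal (s * a) := iSup_le fun x => by
      rw [← ENNReal.ofReal_toReal (hpt x)]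
      exact ENNReal.ofReal_le_ofReal ((div_le_iff₀ ha).1 (hcon x))
    have h2 := ENNReal.toReal_mono (by simp) h1
    rw [← haeq, ENNReal.toReal_ofReal'] at h2
    rcases le_max_iff.1 h2 with h3 | h3
    · nlinarith
    · linarith
  have main := pl_real (fun x => (p x).toReal / a) (fun x => (q x).toReal / b)
    (fun x => g x / √(a * b)) (hp.ennreal_toReal.div_const _) (hq.ennreal_toReal.div_const _)
    (hg.div_const _) (fun x => by positivity) (fun x => by positivity)
    (fun x => div_nonneg (hg0 x) hsab.le)
    (fun x => by
      rw [div_le_one ha, haeq]; exact ENNReal.toReal_mono hat (hpa x))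
    (fun x => by
      rw [div_le_one hb, hbeq]; exact ENNReal.toReal_mono hbt (hqb x))
    (hsup p a ha hat hpt haeq) (hsup q b hb hbt hqt hbeq)
    (fun s => by
      have := hconv (s * √(a * b))
      simpa only [lt_div_iff₀ hsab] using this)
    (fun x y => by
      have h1 := ENNReal.toReal_mono (by simp) (h x y)
      rw [ENNReal.toReal_mul, ENNReal.toReal_ofReal (by positivity)] at h1
      rw [div_pow, Real.sq_sqrt (by positivity), div_mul_div_comm]
      gcongr)
  have e1 : ∀ (p : ℝ → ℝ≥0∞) (a : ℝ), 0 < a → (∀ x, p x ≠ ⊤) →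
      ∫⁻ x, ENNReal.ofReal ((p x).toReal / a) = ENNReal.ofReal a⁻¹ * ∫⁻ x, p x := by
    intro p a ha hpt
    rw [← lintegral_const_mul' _ _ (by simp)]
    refine lintegral_congr fun x => ?_
    rw [div_eq_inv_mul, ENNReal.ofReal_mul (by positivity), ENNReal.ofReal_toReal (hpt x)]
  have e2 : ∫⁻ x, ENNReal.ofReal (g x / √(a * b)) = ENNReal.ofReal (√(a * b))⁻¹ := by
    rw [← mul_one (ENNReal.ofReal _), ← hIntg, ← lintegral_const_mul' _ _ (by simp)]
    refine lintegral_congr fun x => ?_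
    rw [div_eq_inv_mul, ENNReal.ofReal_mul (by positivity)]
  rw [e1 p a ha hpt, e1 q b hb hqt, e2] at main
  have hfin : 2 * ENNReal.ofReal (√(a * b))⁻¹ ≠ ⊤ := ENNReal.mul_ne_top (by simp) (by simp)
  have hI : ∫⁻ x, p x ≠ ⊤ := by
    intro hcon
    rw [hcon, ENNReal.mul_top (by simpa using ha)] at main
    simp at main
    exact hfin (by simpa using main)
  have hJ : ∫⁻ x, q x ≠ ⊤ := by
    intro hcon
    rw [hcon, ENNReal.mul_top (by simpa using hb)] at main
    simp at main
    exact hfin (by simpa using main)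
  have mr := ENNReal.toReal_mono hfin main
  rw [ENNReal.toReal_add (ENNReal.mul_ne_top (by simp) hI) (ENNReal.mul_ne_top (by simp) hJ),
    ENNReal.toReal_mul, ENNReal.toReal_mul, ENNReal.toReal_mul,
    ENNReal.toReal_ofReal (by positivity), ENNReal.toReal_ofReal (by positivity),
    ENNReal.toReal_ofReal (by positivity)] at mr
  have hIJ : (∫⁻ x, p x) * (∫⁻ x, q x) ≠ ⊤ := ENNReal.mul_ne_top hI hJ
  rw [← ENNReal.ofReal_toReal hIJ, ENNReal.toReal_mul]
  apply ENNReal.ofReal_le_one.2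
  set I := (∫⁻ x, p x).toReal
  set J := (∫⁻ x, q x).toReal
  have hI0 : 0 ≤ I := ENNReal.toReal_nonneg
  have hJ0 : 0 ≤ J := ENNReal.toReal_nonneg
  have hsq : (√(a * b))⁻¹ ^ 2 = a⁻¹ * b⁻¹ := by
    rw [inv_pow, Real.sq_sqrt (by positivity), mul_inv]
  have h2 : (a⁻¹ * I + b⁻¹ * J) ^ 2 ≤ 4 * (a⁻¹ * b⁻¹) := by
    rw [← hsq]
    calc _ ≤ (ENNReal.toReal 2 * (√(a * b))⁻¹) ^ 2 := by gcongr
      _ = _ := by simp; ring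
  have h3 : a⁻¹ * b⁻¹ * (I * J) ≤ a⁻¹ * b⁻¹ * 1 := by
    nlinarith [sq_nonneg (a⁻¹ * I - b⁻¹ * J)]
  exact le_of_mul_le_mul_left h3 (by positivity)

lemma tau_one (v : NNReal) (hv : v ≠ 0) (u w : ℝ → ℝ≥0∞) (hu : Measurable u) (hw : Measurable w)
    (h : ∀ x y, u x * w y ≤ ENNReal.ofReal (Real.exp ((x - y) ^ 2 / (4 * v)))) :
    (∫⁻ x, u x ∂gaussianReal 0 v) * (∫⁻ x, w x ∂gaussianReal 0 v) ≤ 1 := by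
  rw [gaussianReal_of_var_ne_zero _ hv,
    lintegral_withDensity_eq_lintegral_mul _ (measurable_gaussianPDF 0 v) hu,
    lintegral_withDensity_eq_lintegral_mul _ (measurable_gaussianPDF 0 v) hw]
  have hv0 : (0 : ℝ) < v := by positivity
  refine pl_ennreal _ _ (gaussianPDFReal 0 v) ((measurable_gaussianPDF 0 v).mul hu)
    ((measurable_gaussianPDF 0 v).mul hw) (measurable_gaussianPDFReal 0 v)
    (gaussianPDFReal_nonneg 0 v) ((√(2 * Real.pi * v))⁻¹) ?_ ?_
    (lintegral_gaussianPDFReal_eq_one 0 hv) ?_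
  · intro x
    rw [gaussianPDFReal]
    have : Real.exp (-(x - 0) ^ 2 / (2 * v)) ≤ 1 := by
      apply Real.exp_le_one_iff.2
      rw [neg_div]; simp; positivity
    exact mul_le_of_le_one_right (by positivity) this
  · intro s
    refine ⟨fun x hx y hy z hz => ?_⟩
    simp only [Set.mem_ofPred_eq] at hx hy ⊢
    have hz2 : z ^ 2 ≤ max (x ^ 2) (y ^ 2) := by
      rcases le_total 0 z with h0 | h0
      · exact le_max_of_le_right (by nlinarith [hz.2])
      · exact le_max_of_le_left (by nlinarith [hz.1])
    have mono : ∀ x, z ^ 2 ≤ x ^ 2 → gaussianPDFReal 0 v x ≤ gaussianPDFReal 0 v z := by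
      intro x hxz
      simp only [gaussianPDFReal, sub_zero]
      gcongr
    rcases le_max_iff.1 hz2 with h1 | h1
    · exact hx.trans_le (mono _ h1)
    · exact hy.trans_le (mono _ h1)
  · intro x y
    simp only [Pi.mul_apply]
    calc gaussianPDF 0 v x * u x * (gaussianPDF 0 v y * w y)
        = gaussianPDF 0 v x * gaussianPDF 0 v y * (u x * w y) := by ring
      _ ≤ gaussianPDF 0 v x * gaussianPDF 0 v y *
          ENNReal.ofReal (Real.exp ((x - y) ^ 2 / (4 * v))) := by gcongr; exact h x y
      _ = ENNReal.ofReal (gaussianPDFReal 0 v ((x + y) / 2) ^ 2) := by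
        have := gaussianPDFReal_nonneg 0 v
        rw [gaussianPDF, gaussianPDF, ← ENNReal.ofReal_mul (this _),
          ← ENNReal.ofReal_mul (mul_nonneg (this _) (this _))]
        congr 1
        simp only [gaussianPDFReal]
        rw [mul_pow, ← Real.exp_nat_mul, mul_mul_mul_comm, ← Real.exp_add, mul_assoc,
          ← Real.exp_add, ← pow_two]
        congr 2
        field_simp
        push_cast
        ring

def Tau {α : Type} [MeasurableSpace α] (μ : Measure α) (c : α → α → ℝ) : Prop :=
  ∀ u w : α → ENNReal, Measurable u → Measurable w →
    (∀ x y, u x * w y ≤ ENNReal.ofReal (Real.exp (c x y))) →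
    (∫⁻ x, u x ∂μ) * (∫⁻ x, w x ∂μ) ≤ 1

lemma tau_prod {α β : Type} [MeasurableSpace α] [MeasurableSpace β] (μ : Measure α)
    (ν : Measure β) [SFinite μ] [SFinite ν] (c : α → α → ℝ) (c' : β → β → ℝ)
    (hμ : Tau μ c) (hν : Tau ν c') :
    Tau (μ.prod ν) (fun x y => c x.1 y.1 + c' x.2 y.2) := by
  intro u w hu hw h
  rw [lintegral_prod _ hu.aemeasurable, lintegral_prod _ hw.aemeasurable]
  refine hμ _ _ hu.lintegral_prod_right' hw.lintegral_prod_right' ?_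
  intro x y
  have key := hν (fun s => ENNReal.ofReal (Real.exp (-c x y)) * u (x, s)) (fun s => w (y, s))
    ((hu.comp measurable_prodMk_left).const_mul _) (hw.comp measurable_prodMk_left) ?_
  · rw [lintegral_const_mul' _ _ (by simp)] at key
    calc (∫⁻ s, u (x, s) ∂ν) * (∫⁻ s, w (y, s) ∂ν)
        = ENNReal.ofReal (Real.exp (c x y)) * (ENNReal.ofReal (Real.exp (-c x y)) *
            (∫⁻ s, u (x, s) ∂ν) * (∫⁻ s, w (y, s) ∂ν)) := by
          rw [mul_assoc, ← mul_assoc (ENNReal.ofReal _), ← ENNReal.ofReal_mul (Real.exp_pos _).le,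
            ← Real.exp_add]
          simp
      _ ≤ ENNReal.ofReal (Real.exp (c x y)) * 1 := by gcongr
      _ = _ := mul_one _
  · intro s t
    calc ENNReal.ofReal (Real.exp (-c x y)) * u (x, s) * w (y, t)
        = ENNReal.ofReal (Real.exp (-c x y)) * (u (x, s) * w (y, t)) := by rw [mul_assoc]
      _ ≤ ENNReal.ofReal (Real.exp (-c x y)) *
            ENNReal.ofReal (Real.exp (c x y + c' s t)) := by gcongr; exact h (x, s) (y, t)
      _ = _ := by
        rw [← ENNReal.ofReal_mul (Real.exp_pos _).le, ← Real.exp_add]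
        congr 2; ring

lemma tau_pi {α : Type} [MeasurableSpace α] (μ : Measure α) [SigmaFinite μ] (c : α → α → ℝ)
    (hμ : Tau μ c) (m : ℕ) :
    Tau (Measure.pi fun _ : Fin m => μ) (fun x y => ∑ i, c (x i) (y i)) := by
  induction m with
  | zero =>
    intro u w hu hw h
    rw [Measure.pi_of_empty (fun _ : Fin 0 => μ)]
    rw [lintegral_dirac' _ hu, lintegral_dirac' _ hw]
    simpa using h (fun a => isEmptyElim a) (fun a => isEmptyElim a)
  | succ m ih =>
    intro u w hu hw h
    have mp := (measurePreserving_piFinSuccAbove (fun _ : Fin (m + 1) => μ) 0).symm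
    rw [← mp.lintegral_comp hu, ← mp.lintegral_comp hw]
    refine tau_prod _ _ _ _ hμ ih _ _ (hu.comp mp.measurable) (hw.comp mp.measurable) ?_
    intro x y
    refine (h _ _).trans (le_of_eq ?_)
    dsimp only
    rw [Fin.sum_univ_succ]
    rfl

lemma tau_gauss (n d : ℕ) (hd : d ≠ 0) :
    Tau (gaussMeasure n d) (fun x y => (d : ℝ) / 4 * ∑ i, ∑ j, (x i j - y i j) ^ 2) := by
  have h1 : Tau (gaussianReal 0 (d : NNReal)⁻¹) (fun x y => (x - y) ^ 2 / (4 * ((d : NNReal)⁻¹ : NNReal))) :=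
    fun u w hu hw h => tau_one _ (by simpa using hd) u w hu hw h
  have h2 := tau_pi _ _ (tau_pi _ _ h1 d) n
  unfold gaussMeasure
  convert h2 using 3 with x y
  rw [Finset.mul_sum]
  refine Finset.sum_congr rfl fun i _ => ?_
  rw [Finset.mul_sum]
  refine Finset.sum_congr rfl fun j _ => ?_
  have : (d : ℝ) ≠ 0 := by exact_mod_cast hd
  push_cast
  field_simp

lemma swap_mp (n d : ℕ) (μ : Measure ℝ) [IsProbabilityMeasure μ] :
    MeasurePreserving (fun (R : Fin n → Fin d → ℝ) (l : Fin d) (i : Fin n) => R i l)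
      (Measure.pi fun _ : Fin n => Measure.pi fun _ : Fin d => μ)
      (Measure.pi fun _ : Fin d => Measure.pi fun _ : Fin n => μ) := by
  have hm : Measurable (fun (R : Fin n → Fin d → ℝ) (l : Fin d) (i : Fin n) => R i l) := by
    fun_prop
  refine ⟨hm, ?_⟩
  symm
  refine Measure.pi_eq_generateFrom
    (C := fun _ => Set.pi Set.univ '' Set.pi Set.univ fun _ : Fin n => {s : Set ℝ | MeasurableSet s})
    (fun _ => generateFrom_pi) (fun _ => isPiSystem_pi)
    (fun _ => ⟨fun _ => Set.univ, fun _ => ⟨fun _ => Set.univ, by simp, by simp⟩, by simp,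
      Set.iUnion_const _⟩) ?_
  intro s hs
  choose t ht hts using hs
  have hms : ∀ l i, MeasurableSet (t l i) := fun l i => ht l i (Set.mem_univ i)
  rw [Measure.map_apply hm]
  · have : (fun (R : Fin n → Fin d → ℝ) (l : Fin d) (i : Fin n) => R i l) ⁻¹' Set.univ.pi s =
        Set.univ.pi fun i => Set.univ.pi fun l => t l i := by
      ext R
      simp only [Set.mem_preimage, Set.mem_pi, Set.mem_univ, true_imp_iff, ← hts]
      exact forall_comm
    rw [this, Measure.pi_pi]
    simp_rw [← hts, Measure.pi_pi]
    exact Finset.prod_comm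
  · exact MeasurableSet.univ_pi fun l => by
      rw [← hts]; exact MeasurableSet.univ_pi (hms l)

lemma cosh_ge (y : ℝ) : y ^ 4 ≤ 24 * (Real.cosh y - 1 - y ^ 2 / 2) := by
  have h := sum_le_hasSum (Finset.range 3)
    (fun i _ => by rw [pow_mul]; positivity) (Real.hasSum_cosh y)
  simp [Finset.sum_range_succ, Nat.factorial] at h
  linarith

section lin
variable {n : ℕ} (v : NNReal)

def gpi (n : ℕ) (v : NNReal) : Measure (Fin n → ℝ) := Measure.pi fun _ => gaussianReal 0 v

instance : IsProbabilityMeasure (gpi n v) := by unfold gpi; infer_instance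

def lin (φ : Fin n → ℝ) (r : Fin n → ℝ) : ℝ := ∑ i, φ i * r i

lemma measurable_lin (φ : Fin n → ℝ) : Measurable (lin φ) := by
  unfold lin
  exact Finset.measurable_sum _ fun i _ => (measurable_pi_apply i).const_mul _

lemma lin_exp (φ : Fin n → ℝ) (s : ℝ) : Integrable (fun r => Real.exp (s * lin φ r)) (gpi n v) ∧
    ∫ r, Real.exp (s * lin φ r) ∂gpi n v = Real.exp (v * s ^ 2 * (∑ i, φ i ^ 2) / 2) := by
  have e : (fun r => Real.exp (s * lin φ r)) = fun r => ∏ i, Real.exp ((s * φ i) * r i) := by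
    funext r
    rw [lin, Finset.mul_sum, Real.exp_sum]
    simp only [mul_assoc]
  rw [e]
  constructor
  · exact Integrable.fintype_prod (f := fun i x => Real.exp ((s * φ i) * x))
      fun i => integrable_exp_mul_gaussianReal _
  · rw [gpi, integral_fintype_prod_eq_prod (f := fun i x => Real.exp ((s * φ i) * x))]
    have := fun t => congrFun (mgf_id_gaussianReal (μ := 0) (v := v)) t
    simp only [mgf, id] at this
    simp_rw [this, ← Real.exp_sum]
    congr 1
    rw [Finset.mul_sum, Finset.sum_div]
    refine Finset.sum_congr rfl fun i _ => by ring

lemma memLp_lin (φ : Fin n → ℝ) : MemLp (lin φ) 2 (gpi n v) := by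
  unfold lin
  refine memLp_finsetSum _ fun i _ => MemLp.const_mul ?_ _
  exact (memLp_id_gaussianReal' 2 (by simp)).comp_measurePreserving
    (measurePreserving_eval (fun _ : Fin n => gaussianReal 0 v) i)

lemma lin_sq (φ : Fin n → ℝ) : ∫ r, lin φ r ^ 2 ∂gpi n v = v * ∑ i, φ i ^ 2 := by
  have hmem : ∀ i, MemLp (fun x => φ i * x) 2 (gaussianReal 0 v) := fun i =>
    (memLp_id_gaussianReal' 2 (by simp)).const_mul _
  have h := variance_sum_pi (μ := fun _ : Fin n => gaussianReal 0 v) (X := fun i x => φ i * x) hmem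
  have e : (∑ i, fun ω : Fin n → ℝ => φ i * ω i) = lin φ := by
    funext r; simp [lin]
  have hmean : ∫ r, lin φ r ∂gpi n v = 0 := by
    unfold lin
    rw [integral_finsetSum]
    · refine Finset.sum_eq_zero fun i _ => ?_
      rw [integral_const_mul, gpi]
      rw [integral_comp_eval (μ := fun _ : Fin n => gaussianReal 0 v) (f := fun x : ℝ => x)
        (by fun_prop), integral_id_gaussianReal, mul_zero]
    · intro i _
      exact (((memLp_id_gaussianReal' 2 (by simp)).comp_measurePreserving
        (measurePreserving_eval (fun _ : Fin n => gaussianReal 0 v) i)).integrable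
          (by norm_num)).const_mul _
  rw [e] at h
  have h2 := variance_of_integral_eq_zero (memLp_lin v φ).aemeasurable hmean
  rw [← gpi] at h
  rw [← h2, h, Finset.mul_sum]
  refine Finset.sum_congr rfl fun i _ => ?_
  rw [variance_const_mul, variance_fun_id_gaussianReal]; ring

lemma lin_mul (φ ψ : Fin n → ℝ) : ∫ r, lin φ r * lin ψ r ∂gpi n v = v * ∑ i, φ i * ψ i := by
  have e : (fun r => lin φ r * lin ψ r) = fun r : Fin n → ℝ =>
      (lin (φ + ψ) r ^ 2 - lin (φ - ψ) r ^ 2) / 4 := by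
    funext r
    have h1 : lin (φ + ψ) r = lin φ r + lin ψ r := by
      simp [lin, add_mul, Finset.sum_add_distrib]
    have h2 : lin (φ - ψ) r = lin φ r - lin ψ r := by
      simp [lin, sub_mul, Finset.sum_sub_distrib]
    rw [h1, h2]; ring
  rw [e, integral_div, integral_sub (memLp_lin v _).integrable_sq (memLp_lin v _).integrable_sq,
    lin_sq, lin_sq, ← mul_sub, ← Finset.sum_sub_distrib, mul_div_assoc, Finset.sum_div]
  congr 1
  refine Finset.sum_congr rfl fun i _ => ?_
  simp only [Pi.add_apply, Pi.sub_apply]; ring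

lemma lin_four (hv : v ≠ 0) (φ : Fin n → ℝ) (hφ : ∑ i, φ i ^ 2 = 1) :
    Integrable (fun r => lin φ r ^ 4) (gpi n v) ∧ ∫ r, lin φ r ^ 4 ∂gpi n v ≤ 4 * v ^ 2 := by
  have hv0 : (0 : ℝ) < v := by positivity
  set s : ℝ := (√v)⁻¹ with hs
  have hs2 : s ^ 2 = (v : ℝ)⁻¹ := by rw [hs, inv_pow, Real.sq_sqrt hv0.le]
  have hc : ∀ r : Fin n → ℝ, lin φ r ^ 4 ≤
      v ^ 2 * (24 * ((Real.exp (s * lin φ r) + Real.exp ((-s) * lin φ r)) / 2 - 1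
        - (v : ℝ)⁻¹ * lin φ r ^ 2 / 2)) := by
    intro r
    have := cosh_ge (s * lin φ r)
    rw [Real.cosh_eq, mul_pow, mul_pow, show s ^ 4 = (s ^ 2) ^ 2 by ring, hs2] at this
    rw [neg_mul]
    calc lin φ r ^ 4 = v ^ 2 * ((v : ℝ)⁻¹ ^ 2 * lin φ r ^ 4) := by field_simp
      _ ≤ _ := by gcongr
  obtain ⟨i1, e1⟩ := lin_exp v φ s
  obtain ⟨i2, e2⟩ := lin_exp v φ (-s)
  have i3 := (memLp_lin v φ).integrable_sq
  have e3 := lin_sq v φ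
  rw [hφ] at e1 e2 e3
  rw [hs2] at e1
  rw [neg_sq, hs2] at e2
  have iA : Integrable (fun r => (Real.exp (s * lin φ r) + Real.exp ((-s) * lin φ r)) / 2)
    (gpi n v) := (i1.add i2).div_const 2
  have iB : Integrable (fun r => (Real.exp (s * lin φ r) + Real.exp ((-s) * lin φ r)) / 2 - 1)
    (gpi n v) := iA.sub (integrable_const 1)
  have iC := (i3.const_mul (v : ℝ)⁻¹).div_const 2
  have iD := ((iB.sub iC).const_mul 24).const_mul ((v : ℝ) ^ 2)
  have hI : Integrable (fun r => lin φ r ^ 4) (gpi n v) := by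
    refine iD.mono' ?_ (Filter.Eventually.of_forall fun r => ?_)
    · exact ((measurable_lin φ).pow_const 4).aestronglyMeasurable
    · rw [Real.norm_of_nonneg (by positivity)]
      exact hc r
  refine ⟨hI, ?_⟩
  refine (integral_mono hI iD hc).trans ?_
  simp only [Pi.sub_apply]
  rw [integral_const_mul, integral_const_mul, integral_sub iB iC, integral_sub iA (integrable_const 1),
    integral_div, integral_add i1 i2, integral_div, integral_const_mul, e1, e2, e3]
  simp only [integral_const, probReal_univ, smul_eq_mul, mul_one]
  rw [mul_inv_cancel₀ hv0.ne', inv_mul_cancel₀ hv0.ne']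
  have he : Real.exp (1 / 2) ≤ 5 / 3 := by
    have h1 : Real.exp (1 / 2) ^ 2 = Real.exp 1 := by rw [← Real.exp_nat_mul]; norm_num
    have := Real.exp_one_lt_d9
    have := Real.exp_pos (1 / 2)
    nlinarith
  nlinarith [sq_nonneg (v : ℝ)]
end lin

def wEnt {n d : ℕ} (φ ψ : Fin n → ℝ) (R : Fin n → Fin d → ℝ) : ℝ :=
  ∑ l, lin φ (fun i => R i l) * lin ψ (fun i => R i l)

lemma lin_mul_memLp {n : ℕ} (v : NNReal) (hv : v ≠ 0) (φ ψ : Fin n → ℝ) (hφ : ∑ i, φ i ^ 2 = 1)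
    (hψ : ∑ i, ψ i ^ 2 = 1) : MemLp (fun r => lin φ r * lin ψ r) 2 (gpi n v) ∧
    Var[fun r => lin φ r * lin ψ r; gpi n v] ≤ 4 * v ^ 2 := by
  obtain ⟨i1, e1⟩ := lin_four v hv φ hφ
  obtain ⟨i2, e2⟩ := lin_four v hv ψ hψ
  have hm : AEStronglyMeasurable (fun r => lin φ r * lin ψ r) (gpi n v) :=
    ((measurable_lin φ).mul (measurable_lin ψ)).aestronglyMeasurable
  have hle : ∀ r, (lin φ r * lin ψ r) ^ 2 ≤ (lin φ r ^ 4 + lin ψ r ^ 4) / 2 := fun r => by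
    nlinarith [sq_nonneg (lin φ r ^ 2 - lin ψ r ^ 2)]
  have i3 : Integrable (fun r => (lin φ r ^ 4 + lin ψ r ^ 4) / 2) (gpi n v) :=
    (i1.add i2).div_const 2
  have i4 : Integrable (fun r => (lin φ r * lin ψ r) ^ 2) (gpi n v) := by
    refine i3.mono' (hm.pow 2) (Filter.Eventually.of_forall fun r => ?_)
    rw [Real.norm_of_nonneg (by positivity)]
    exact hle r
  refine ⟨(memLp_two_iff_integrable_sq hm).2 i4, ?_⟩
  refine (variance_le_expectation_sq hm).trans ?_
  refine (integral_mono i4 i3 hle).trans ?_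
  rw [integral_div, integral_add i1 i2]
  linarith

lemma wEnt_moments {n d : ℕ} (hd : d ≠ 0) (φ ψ : Fin n → ℝ) (hφ : ∑ i, φ i ^ 2 = 1)
    (hψ : ∑ i, ψ i ^ 2 = 1) :
    MemLp (fun R => wEnt φ ψ R - ∑ i, φ i * ψ i) 2 (gaussMeasure n d) ∧
    ∫ R, (wEnt φ ψ R - ∑ i, φ i * ψ i) ∂gaussMeasure n d = 0 ∧
    ∫ R, (wEnt φ ψ R - ∑ i, φ i * ψ i) ^ 2 ∂gaussMeasure n d ≤ 4 / d := by
  have hd0 : (d : ℝ) ≠ 0 := by exact_mod_cast hd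
  set v : NNReal := (d : NNReal)⁻¹ with hvdef
  have hv : v ≠ 0 := by simpa [hvdef] using hd
  have hvr : (v : ℝ) = (d : ℝ)⁻¹ := by simp [hvdef]
  obtain ⟨hX, hvar⟩ := lin_mul_memLp v hv φ ψ hφ hψ
  have mp : MeasurePreserving (fun (R : Fin n → Fin d → ℝ) (l : Fin d) (i : Fin n) => R i l)
    (gaussMeasure n d) (Measure.pi fun _ : Fin d => gpi n v) := swap_mp n d (gaussianReal 0 v)
  set T : (Fin d → Fin n → ℝ) → ℝ := ∑ l, fun ω => lin φ (ω l) * lin ψ (ω l) with hT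
  have hTapp : ∀ ω, T ω = ∑ l, lin φ (ω l) * lin ψ (ω l) := fun ω => by simp [hT]
  have hmem : ∀ l : Fin d, MemLp (fun ω : Fin d → Fin n → ℝ => lin φ (ω l) * lin ψ (ω l)) 2
      (Measure.pi fun _ : Fin d => gpi n v) := fun l =>
    hX.comp_measurePreserving (measurePreserving_eval (fun _ : Fin d => gpi n v) l)
  have hTm : MemLp T 2 (Measure.pi fun _ : Fin d => gpi n v) := memLp_finsetSum' _ fun l _ => hmem l
  have hTv : Var[T; Measure.pi fun _ : Fin d => gpi n v] ≤ 4 / d := by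
    rw [hT, variance_sum_pi (μ := fun _ : Fin d => gpi n v)
      (X := fun _ r => lin φ r * lin ψ r) (fun _ => hX)]
    refine (Finset.sum_le_sum fun _ _ => hvar).trans ?_
    simp only [Finset.sum_const, Finset.card_univ, Fintype.card_fin, nsmul_eq_mul, hvr]
    apply le_of_eq; field_simp
  have hTi : ∫ ω, T ω ∂(Measure.pi fun _ : Fin d => gpi n v) = ∑ i, φ i * ψ i := by
    simp_rw [hTapp]
    rw [integral_finsetSum _ fun l _ => (hmem l).integrable (by norm_num)]
    have : ∀ l : Fin d, ∫ ω : Fin d → Fin n → ℝ, lin φ (ω l) * lin ψ (ω l)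
        ∂(Measure.pi fun _ : Fin d => gpi n v) = v * ∑ i, φ i * ψ i := fun l => by
      rw [integral_comp_eval (μ := fun _ : Fin d => gpi n v) (f := fun r => lin φ r * lin ψ r)
        hX.aestronglyMeasurable, lin_mul]
    simp only [this, Finset.sum_const, Finset.card_univ, Fintype.card_fin, nsmul_eq_mul, hvr]
    field_simp
  have hsub : MemLp (fun ω => T ω - ∑ i, φ i * ψ i) 2 (Measure.pi fun _ : Fin d => gpi n v) :=
    hTm.sub (memLp_const _)
  have hw : ∀ R : Fin n → Fin d → ℝ, wEnt φ ψ R = T (fun l i => R i l) := fun R => by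
    rw [hTapp]; rfl
  have tr : ∀ f : (Fin d → Fin n → ℝ) → ℝ,
      AEStronglyMeasurable f (Measure.pi fun _ : Fin d => gpi n v) →
      ∫ R, f (fun l i => R i l) ∂gaussMeasure n d =
      ∫ ω, f ω ∂(Measure.pi fun _ : Fin d => gpi n v) := fun f hf => by
    rw [← mp.map_eq] at hf ⊢
    rw [integral_map mp.measurable.aemeasurable hf]
  simp_rw [hw]
  refine ⟨hsub.comp_measurePreserving mp, ?_, ?_⟩
  · rw [tr _ hsub.aestronglyMeasurable,
      integral_sub (hTm.integrable (by norm_num)) (integrable_const _), hTi]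
    simp
  · rw [tr (fun ω => (T ω - ∑ i, φ i * ψ i) ^ 2) (hsub.aestronglyMeasurable.pow 2)]
    rw [variance_eq_integral hTm.aemeasurable, hTi] at hTv
    exact hTv

lemma frob_nonneg {a b : ℕ} (M : Matrix (Fin a) (Fin b) ℝ) : 0 ≤ frob M := Real.sqrt_nonneg _

lemma frob_sq {a b : ℕ} (M : Matrix (Fin a) (Fin b) ℝ) : frob M ^ 2 = (Mᵀ * M).trace := by
  rw [frob, Real.sq_sqrt (by positivity)]
  simp only [Matrix.trace, Matrix.diag, Matrix.mul_apply, Matrix.transpose_apply]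
  rw [Finset.sum_comm]
  simp only [pow_two]

lemma trace_le_frob {a b : ℕ} (M N : Matrix (Fin a) (Fin b) ℝ) :
    (Mᵀ * N).trace ≤ frob M * frob N := by
  have e : (Mᵀ * N).trace = ∑ p : Fin a × Fin b, M p.1 p.2 * N p.1 p.2 := by
    simp only [Matrix.trace, Matrix.diag, Matrix.mul_apply, Matrix.transpose_apply]
    rw [Finset.sum_comm, Fintype.sum_prod_type]
  rw [e, frob, frob, ← Fintype.sum_prod_type', ← Fintype.sum_prod_type']
  exact Real.sum_mul_le_sqrt_mul_sqrt _ _ _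

lemma frob_add_le {a b : ℕ} (M N : Matrix (Fin a) (Fin b) ℝ) :
    frob (M + N) ≤ frob M + frob N := by
  have h : frob (M + N) ^ 2 ≤ (frob M + frob N) ^ 2 := by
    have h1 := trace_le_frob M N
    have h2 := trace_le_frob N M
    rw [frob_sq]
    simp only [Matrix.transpose_add, Matrix.add_mul, Matrix.mul_add, Matrix.trace_add]
    rw [← frob_sq, ← frob_sq]
    nlinarith
  exact le_of_sq_le_sq h (add_nonneg (frob_nonneg _) (frob_nonneg _))

lemma frob_neg {a b : ℕ} (M : Matrix (Fin a) (Fin b) ℝ) : frob (-M) = frob M := by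
  simp [frob]

lemma frob_sub_le {a b : ℕ} (M N : Matrix (Fin a) (Fin b) ℝ) :
    frob M - frob N ≤ frob (M - N) := by
  have := frob_add_le (M - N) N
  rw [sub_add_cancel] at this
  linarith

lemma frob_le_of_sq {a b a' b' : ℕ} (M : Matrix (Fin a) (Fin b) ℝ) (N : Matrix (Fin a') (Fin b') ℝ)
    (h : frob M ^ 2 ≤ frob N ^ 2) : frob M ≤ frob N := le_of_sq_le_sq h (frob_nonneg _)

lemma frob_transpose_mul_le {n k d : ℕ} (X : Matrix (Fin n) (Fin k) ℝ) (hX : Xᵀ * X = 1)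
    (M : Matrix (Fin n) (Fin d) ℝ) : frob (Xᵀ * M) ≤ frob M ∧ frob (M - X * Xᵀ * M) ≤ frob M := by
  have h : frob (M - X * Xᵀ * M) ^ 2 = frob M ^ 2 - frob (Xᵀ * M) ^ 2 := by
    rw [frob_sq, frob_sq, frob_sq, ← Matrix.trace_sub]
    congr 1
    simp only [Matrix.transpose_sub, Matrix.transpose_mul, Matrix.transpose_transpose,
      Matrix.sub_mul, Matrix.mul_sub]
    have e : Mᵀ * (X * Xᵀ) * (X * Xᵀ * M) = Mᵀ * (X * Xᵀ * M) := by
      calc _ = Mᵀ * (X * (Xᵀ * X) * Xᵀ * M) := by simp only [Matrix.mul_assoc]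
        _ = _ := by rw [hX, Matrix.mul_one]
    rw [e]
    simp only [Matrix.mul_assoc, sub_self, sub_zero]
  refine ⟨frob_le_of_sq _ _ ?_, frob_le_of_sq _ _ ?_⟩
  · nlinarith [sq_nonneg (frob (M - X * Xᵀ * M))]
  · nlinarith [sq_nonneg (frob (Xᵀ * M))]

lemma frob_mul_left {n k d : ℕ} (X : Matrix (Fin n) (Fin k) ℝ) (hX : Xᵀ * X = 1)
    (M : Matrix (Fin k) (Fin d) ℝ) : frob (X * M) = frob M := by
  have : frob (X * M) ^ 2 = frob M ^ 2 := by
    rw [frob_sq, frob_sq, Matrix.transpose_mul, Matrix.mul_assoc, ← Matrix.mul_assoc Xᵀ, hX,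
      Matrix.one_mul]
  exact (sq_eq_sq₀ (frob_nonneg _) (frob_nonneg _)).1 this

lemma indicator_orth {n k : ℕ} (X : Matrix (Fin n) (Fin k) ℝ) (hX : IsIndicator X) :
    Xᵀ * X = 1 := by
  obtain ⟨f, hf, hX⟩ := hX
  ext j j'
  simp only [Matrix.mul_apply, Matrix.transpose_apply, hX]
  by_cases h : j = j'
  · subst h
    rw [Matrix.one_apply_eq]
    have hpos : 0 < (Finset.univ.filter fun i' => f i' = j).card := by
      obtain ⟨i, hi⟩ := hf j
      exact Finset.card_pos.2 ⟨i, by simp [hi]⟩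
    have hpos' : (0 : ℝ) < (Finset.univ.filter fun i' => f i' = j).card := by exact_mod_cast hpos
    have : ∀ i, ((if f i = j then 1 / √((Finset.univ.filter fun i' => f i' = j).card : ℝ) else 0) *
        if f i = j then 1 / √((Finset.univ.filter fun i' => f i' = j).card : ℝ) else 0) =
        if f i = j then 1 / ((Finset.univ.filter fun i' => f i' = j).card : ℝ) else 0 := by
      intro i
      split_ifs
      · rw [div_mul_div_comm, Real.mul_self_sqrt hpos'.le, one_mul]
      · simp
    simp_rw [this]
    rw [← Finset.sum_filter, Finset.sum_const, nsmul_eq_mul]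
    field_simp
  · rw [Matrix.one_apply_ne h]
    refine Finset.sum_eq_zero fun i _ => ?_
    by_cases h1 : f i = j
    · have h2 : ¬ f i = j' := by rw [h1]; exact h
      rw [if_neg h2, mul_zero]
    · rw [if_neg h1, zero_mul]

/-- cost on `Φ Φᵀ y` -/
lemma cost_eq {n k d : ℕ} (Φ X : Matrix (Fin n) (Fin k) ℝ) (y : Matrix (Fin n) (Fin d) ℝ) :
    kmeansCost (Φ * Φᵀ * y) X = frob ((Φ - X * Xᵀ * Φ) * (Φᵀ * y)) := by
  rw [kmeansCost]
  congr 1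
  simp only [Matrix.sub_mul, Matrix.mul_assoc]

lemma cost_lip {n k d : ℕ} (Φ X : Matrix (Fin n) (Fin k) ℝ) (hΦ : Φᵀ * Φ = 1) (hX : Xᵀ * X = 1)
    (x y : Matrix (Fin n) (Fin d) ℝ) :
    kmeansCost (Φ * Φᵀ * x) X - kmeansCost (Φ * Φᵀ * y) X ≤ frob (x - y) := by
  calc _ ≤ frob (Φ * Φᵀ * x - X * Xᵀ * (Φ * Φᵀ * x) - (Φ * Φᵀ * y - X * Xᵀ * (Φ * Φᵀ * y))) :=
        frob_sub_le _ _
    _ = frob (Φ * (Φᵀ * (x - y)) - X * Xᵀ * (Φ * (Φᵀ * (x - y)))) := by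
      congr 1
      simp only [Matrix.mul_sub, Matrix.mul_assoc]
      abel
    _ ≤ frob (Φ * (Φᵀ * (x - y))) := (frob_transpose_mul_le X hX _).2
    _ = frob (Φᵀ * (x - y)) := frob_mul_left Φ hΦ _
    _ ≤ _ := (frob_transpose_mul_le Φ hΦ _).1

lemma cost_sq_diff {n k d : ℕ} (A : Matrix (Fin n) (Fin k) ℝ) (G : Matrix (Fin k) (Fin d) ℝ) :
    frob (A * G) ^ 2 - frob A ^ 2 = ((Aᵀ * A)ᵀ * (G * Gᵀ - 1)).trace := by
  rw [frob_sq, frob_sq, Matrix.transpose_mul, Matrix.transpose_mul, Matrix.transpose_transpose,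
    Matrix.mul_sub, Matrix.trace_sub, Matrix.mul_one]
  congr 1
  rw [Matrix.mul_assoc, Matrix.trace_mul_comm]
  simp only [Matrix.mul_assoc]

lemma cost_lower {n k d : ℕ} (Φ X : Matrix (Fin n) (Fin k) ℝ) (hΦ : Φᵀ * Φ = 1) (hX : Xᵀ * X = 1)
    (y : Matrix (Fin n) (Fin d) ℝ) :
    kmeansCost Φ X - kmeansCost (Φ * Φᵀ * y) X ≤ frob ((Φᵀ * y) * (Φᵀ * y)ᵀ - 1) := by
  rw [cost_eq, kmeansCost]
  set A := Φ - X * Xᵀ * Φ with hA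
  set G := Φᵀ * y
  have h1 := cost_sq_diff A G
  have h2 := trace_le_frob (-(Aᵀ * A)) (G * Gᵀ - 1)
  rw [frob_neg, Matrix.transpose_neg, Matrix.neg_mul, Matrix.trace_neg, ← h1] at h2
  have e : Aᵀ * A = Φᵀ * A := by
    have : (X * Xᵀ) * A = 0 := by
      rw [hA, Matrix.mul_sub]
      have : X * Xᵀ * (X * Xᵀ * Φ) = X * Xᵀ * Φ := by
        calc _ = X * (Xᵀ * X) * Xᵀ * Φ := by simp only [Matrix.mul_assoc]
          _ = _ := by rw [hX, Matrix.mul_one]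
      rw [this, sub_self]
    calc Aᵀ * A = Φᵀ * A - Φᵀ * ((X * Xᵀ) * A) := by
          have hAt : Aᵀ = (Φ - X * Xᵀ * Φ)ᵀ := rfl
          rw [hAt]
          simp only [Matrix.transpose_sub, Matrix.transpose_mul, Matrix.transpose_transpose,
            Matrix.sub_mul, Matrix.mul_assoc]
      _ = _ := by rw [this, Matrix.mul_zero, sub_zero]
  have h3 : frob (Aᵀ * A) ≤ frob A := by rw [e]; exact (frob_transpose_mul_le Φ hΦ _).1
  have hE := frob_nonneg (G * Gᵀ - 1)
  have hA0 := frob_nonneg A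
  have hAG := frob_nonneg (A * G)
  by_contra hcon
  push Not at hcon
  have hpos : 0 < frob A := by linarith
  have h4 : frob (Aᵀ * A) * frob (G * Gᵀ - 1) ≤ frob A * frob (G * Gᵀ - 1) := by gcongr
  nlinarith

lemma cost_upper {n k d : ℕ} (A : Matrix (Fin n) (Fin k) ℝ) (G : Matrix (Fin k) (Fin d) ℝ) :
    frob (A * G) - frob A ≤ ((Aᵀ * A)ᵀ * (G * Gᵀ - 1)).trace / (2 * frob A) := by
  rw [← cost_sq_diff]
  rcases (frob_nonneg A).eq_or_lt with h | h
  · have : A = 0 := by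
      have h' := h.symm
      rw [frob, Real.sqrt_eq_zero (by positivity),
        Finset.sum_eq_zero_iff_of_nonneg (fun i _ => by positivity)] at h'
      ext i j
      have h2 := h' i (Finset.mem_univ _)
      rw [Finset.sum_eq_zero_iff_of_nonneg (fun i _ => by positivity)] at h2
      simpa using h2 j (Finset.mem_univ _)
    rw [this, Matrix.zero_mul]
    have h0 : ∀ a b : ℕ, frob (0 : Matrix (Fin a) (Fin b) ℝ) = 0 := fun a b => by simp [frob]
    simp [h0]
  · rw [le_div_iff₀ (by positivity)]
    nlinarith [sq_nonneg (frob (A * G) - frob A)]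

lemma orth_phi {n k : ℕ} (hnk : k ≤ n) (U : Matrix (Fin n) (Fin n) ℝ) (hU : Uᵀ * U = 1)
    (Φ : Matrix (Fin n) (Fin k) ℝ) (hΦ : Φ = U * rectId n k) : Φᵀ * Φ = 1 := by
  rw [hΦ, Matrix.transpose_mul, Matrix.mul_assoc, ← Matrix.mul_assoc Uᵀ, hU, Matrix.one_mul]
  ext a b
  simp only [Matrix.mul_apply, Matrix.transpose_apply, rectId, Matrix.of_apply]
  rw [Finset.sum_eq_single (Fin.castLE hnk a)]
  · simp [Matrix.one_apply, Fin.ext_iff]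
  · intro i _ hi
    rw [if_neg, zero_mul]
    intro h; exact hi (Fin.ext h)
  · simp

/-- the error matrix `G Gᵀ - 1`, `G = Φᵀ y` -/
def errM {n k d : ℕ} (Φ : Matrix (Fin n) (Fin k) ℝ) (y : Fin n → Fin d → ℝ) :
    Matrix (Fin k) (Fin k) ℝ := (Φᵀ * Matrix.of y) * (Φᵀ * Matrix.of y)ᵀ - 1

lemma errM_apply {n k d : ℕ} (Φ : Matrix (Fin n) (Fin k) ℝ) (hΦ : Φᵀ * Φ = 1)
    (y : Fin n → Fin d → ℝ) (a b : Fin k) :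
    errM Φ y a b = wEnt (fun i => Φ i a) (fun i => Φ i b) y - ∑ i, Φ i a * Φ i b := by
  have h : (1 : Matrix (Fin k) (Fin k) ℝ) a b = ∑ i, Φ i a * Φ i b := by
    rw [← hΦ]; simp [Matrix.mul_apply]
  rw [errM, Matrix.sub_apply, h]
  simp [Matrix.mul_apply, wEnt, lin]
  refine Finset.sum_congr rfl fun l _ => ?_
  congr 1
  exact Finset.sum_congr rfl fun i _ => mul_comm _ _

def bndN {n k d : ℕ} (Φ B : Matrix (Fin n) (Fin k) ℝ) (m : ℝ) (y : Fin n → Fin d → ℝ) : ℝ :=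
  frob (errM Φ y) ^ 2 / (2 * m) + m / 2 + ((Bᵀ * B)ᵀ * errM Φ y).trace / (2 * frob B)

lemma bndN_int {n k d : ℕ} (hd : d ≠ 0) (Φ B : Matrix (Fin n) (Fin k) ℝ) (hΦ : Φᵀ * Φ = 1)
    (m : ℝ) (hm : 0 < m) (hm2 : m ^ 2 = 4 * k ^ 2 / d) :
    Integrable (bndN (d := d) Φ B m) (gaussMeasure n d) ∧
      ∫ y, bndN (d := d) Φ B m y ∂gaussMeasure n d ≤ m := by
  have hprob : IsProbabilityMeasure (gaussMeasure n d) := by unfold gaussMeasure; infer_instance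
  have hunit : ∀ a, ∑ i, Φ i a ^ 2 = 1 := fun a => by
    have := congrFun (congrFun hΦ a) a
    simpa [Matrix.mul_apply, pow_two] using this
  have hmom := fun a b => wEnt_moments hd (fun i => Φ i a) (fun i => Φ i b) (hunit a) (hunit b)
  simp_rw [← errM_apply Φ hΦ] at hmom
  have isq : ∀ a b, Integrable (fun y : Fin n → Fin d → ℝ => errM Φ y a b ^ 2) (gaussMeasure n d) :=
    fun a b => (hmom a b).1.integrable_sq
  have ilin : ∀ a b, Integrable (fun y : Fin n → Fin d → ℝ => errM Φ y a b) (gaussMeasure n d) :=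
    fun a b => (hmom a b).1.integrable (by norm_num)
  have e1 : ∀ y : Fin n → Fin d → ℝ, frob (errM Φ y) ^ 2 = ∑ a, ∑ b, errM Φ y a b ^ 2 := fun y => by
    rw [frob, Real.sq_sqrt (by positivity)]
  obtain ⟨c, e2⟩ : ∃ c : Fin k → Fin k → ℝ, ∀ y : Fin n → Fin d → ℝ,
      ((Bᵀ * B)ᵀ * errM Φ y).trace = ∑ a, ∑ b, c a b * errM Φ y b a :=
    ⟨fun a b => ((Bᵀ * B)ᵀ : Matrix (Fin k) (Fin k) ℝ) a b, fun y => by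
      simp only [Matrix.trace, Matrix.diag, Matrix.mul_apply (M := (Bᵀ * B)ᵀ)]⟩
  have i1 : Integrable (fun y : Fin n → Fin d → ℝ => frob (errM Φ y) ^ 2) (gaussMeasure n d) := by
    simp_rw [e1]
    exact integrable_finsetSum _ fun a _ => integrable_finsetSum _ fun b _ => isq a b
  have i2 : Integrable (fun y : Fin n → Fin d → ℝ => ((Bᵀ * B)ᵀ * errM Φ y).trace)
      (gaussMeasure n d) := by
    simp_rw [e2]
    exact integrable_finsetSum _ fun a _ => integrable_finsetSum _ fun b _ =>
      (ilin b a).const_mul _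
  have v1 : ∫ y : Fin n → Fin d → ℝ, frob (errM Φ y) ^ 2 ∂gaussMeasure n d ≤ m ^ 2 := by
    simp_rw [e1]
    rw [integral_finsetSum _ fun a _ => integrable_finsetSum _ fun b _ => isq a b]
    simp_rw [integral_finsetSum _ fun b _ => isq _ b]
    refine (Finset.sum_le_sum fun a _ => Finset.sum_le_sum fun b _ => (hmom a b).2.2).trans ?_
    simp only [Finset.sum_const, Finset.card_univ, Fintype.card_fin, nsmul_eq_mul]
    rw [hm2]; apply le_of_eq; ring
  have v2 : ∫ y : Fin n → Fin d → ℝ, ((Bᵀ * B)ᵀ * errM Φ y).trace ∂gaussMeasure n d = 0 := by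
    simp_rw [e2]
    rw [integral_finsetSum _ fun a _ => integrable_finsetSum _ fun b _ => (ilin b a).const_mul _]
    refine Finset.sum_eq_zero fun a _ => ?_
    rw [integral_finsetSum _ fun b _ => (ilin b a).const_mul _]
    refine Finset.sum_eq_zero fun b _ => ?_
    rw [integral_const_mul, (hmom b a).2.1, mul_zero]
  have j1 : Integrable (fun y : Fin n → Fin d → ℝ => frob (errM Φ y) ^ 2 / (2 * m) + m / 2)
    (gaussMeasure n d) := (i1.div_const _).add (integrable_const _)
  have j2 := i2.div_const (2 * frob B)
  refine ⟨j1.add j2, ?_⟩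
  unfold bndN
  rw [integral_add j1 j2, integral_add (i1.div_const _) (integrable_const _), integral_div,
    integral_div (2 * frob B), v2]
  simp only [integral_const, probReal_univ, smul_eq_mul, one_mul, zero_div, add_zero]
  have : (∫ y : Fin n → Fin d → ℝ, frob (errM Φ y) ^ 2 ∂gaussMeasure n d) / (2 * m) ≤ m / 2 := by
    rw [div_le_iff₀ (by positivity)]
    nlinarith
  linarith

lemma ofReal_exp_le {α : Type} [MeasurableSpace α] (μ : Measure α) [IsProbabilityMeasure μ]
    (N : α → ℝ) (hN : Integrable N μ) (m lam : ℝ) (hlam : 0 ≤ lam) (hle : ∫ y, N y ∂μ ≤ m) :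
    ENNReal.ofReal (Real.exp (-lam * m)) ≤ ∫⁻ y, ENNReal.ofReal (Real.exp (-lam * N y)) ∂μ := by
  set h : α → ℝ := fun y => Real.exp (-lam * m) * (1 - lam * (N y - m)) with hh
  have hIntg : Integrable h μ :=
    ((integrable_const (1 : ℝ)).sub ((hN.sub (integrable_const m)).const_mul lam)).const_mul _
  have hval : Real.exp (-lam * m) ≤ ∫ y, h y ∂μ := by
    rw [hh]
    have i1 : Integrable (fun y => N y - m) μ := hN.sub (integrable_const m)
    have i2 : Integrable (fun y => lam * (N y - m)) μ := i1.const_mul lam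
    rw [integral_const_mul, integral_sub (integrable_const _) i2, integral_const_mul,
      integral_sub hN (integrable_const m)]
    simp only [integral_const, probReal_univ, smul_eq_mul, one_mul]
    have := Real.exp_pos (-lam * m)
    have : lam * (∫ y, N y ∂μ - m) ≤ 0 := mul_nonpos_of_nonneg_of_nonpos hlam (by linarith)
    nlinarith
  have hpt : ∀ y, h y ≤ Real.exp (-lam * N y) := fun y => by
    have h1 := Real.add_one_le_exp (-lam * (N y - m))
    calc h y ≤ Real.exp (-lam * m) * Real.exp (-lam * (N y - m)) := by
          rw [hh]; dsimp only; gcongr; linarith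
      _ = _ := by rw [← Real.exp_add]; congr 1; ring
  calc ENNReal.ofReal (Real.exp (-lam * m)) ≤ ENNReal.ofReal (∫ y, max (h y) 0 ∂μ) := by
        apply ENNReal.ofReal_le_ofReal
        exact hval.trans (integral_mono hIntg hIntg.pos_part fun y => le_max_left _ _)
    _ = ∫⁻ y, ENNReal.ofReal (max (h y) 0) ∂μ :=
        ofReal_integral_eq_lintegral_ofReal hIntg.pos_part
          (Filter.Eventually.of_forall fun y => le_max_right _ _)
    _ ≤ _ := by
        refine lintegral_mono fun y => ENNReal.ofReal_le_ofReal ?_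
        exact max_le (hpt y) (Real.exp_pos _).le

lemma bad_bound {n d : ℕ} (hd : d ≠ 0) (N : (Fin n → Fin d → ℝ) → ℝ) (hNm : Measurable N)
    (hN : Integrable N (gaussMeasure n d)) (m u s : ℝ) (hs : 0 ≤ s) (hu : u = m + s)
    (hle : ∫ y, N y ∂gaussMeasure n d ≤ m) :
    ∃ bad : Set (Fin n → Fin d → ℝ), MeasurableSet bad ∧
      (∀ x, (∀ y, u ≤ N y + 2 * frob (Matrix.of x - Matrix.of y)) → x ∈ bad) ∧
      gaussMeasure n d bad ≤ ENNReal.ofReal (Real.exp (-(d * s ^ 2 / 16))) := by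
  have hprob : IsProbabilityMeasure (gaussMeasure n d) := by unfold gaussMeasure; infer_instance
  have hd0 : (0 : ℝ) < d := by positivity
  let bad : Set (Fin n → Fin d → ℝ) := {x | ∀ y, u ≤ N y + 2 * frob (Matrix.of x - Matrix.of y)}
  have hmeas : MeasurableSet bad := by
    have : bad = ⋂ y, {x | u ≤ N y + 2 * frob (Matrix.of x - Matrix.of y)} := by
      ext x; simp [bad]
    rw [this]
    refine (isClosed_iInter fun y => isClosed_le continuous_const ?_).measurableSet
    simp only [frob, Matrix.sub_apply, Matrix.of_apply]
    fun_prop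
  refine ⟨bad, hmeas, fun x hx => hx, ?_⟩
  set lam : ℝ := d * s / 8 with hlam
  have hlam0 : 0 ≤ lam := by positivity
  have key := tau_gauss n d hd
    (bad.indicator fun _ => ENNReal.ofReal (Real.exp (lam * u - 4 * lam ^ 2 / d)))
    (fun y => ENNReal.ofReal (Real.exp (-lam * N y)))
    (measurable_const.indicator hmeas) (by fun_prop) ?_
  · rw [lintegral_indicator_const hmeas] at key
    have hJ := ofReal_exp_le _ N hN m lam hlam0 hle
    have h1 : ENNReal.ofReal (Real.exp (d * s ^ 2 / 16)) * gaussMeasure n d bad ≤ 1 := by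
      calc _ = ENNReal.ofReal (Real.exp (lam * u - 4 * lam ^ 2 / d)) * gaussMeasure n d bad *
            ENNReal.ofReal (Real.exp (-lam * m)) := by
            rw [mul_right_comm, ← ENNReal.ofReal_mul (Real.exp_pos _).le, ← Real.exp_add]
            congr 3
            rw [hlam, hu]; field_simp; ring
        _ ≤ _ := by gcongr
        _ ≤ 1 := key
    calc gaussMeasure n d bad = ENNReal.ofReal (Real.exp (-(d * s ^ 2 / 16))) *
          (ENNReal.ofReal (Real.exp (d * s ^ 2 / 16)) * gaussMeasure n d bad) := by
          rw [← mul_assoc, ← ENNReal.ofReal_mul (Real.exp_pos _).le, ← Real.exp_add]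
          simp
      _ ≤ ENNReal.ofReal (Real.exp (-(d * s ^ 2 / 16))) * 1 := by gcongr
      _ = _ := mul_one _
  · intro x y
    by_cases hx : x ∈ bad
    · rw [Set.indicator_of_mem hx, ← ENNReal.ofReal_mul (Real.exp_pos _).le, ← Real.exp_add]
      apply ENNReal.ofReal_le_ofReal
      apply Real.exp_le_exp.2
      have hxy : u ≤ N y + 2 * frob (Matrix.of x - Matrix.of y) := hx y
      have hsq : ∑ i, ∑ j, (x i j - y i j) ^ 2 = frob (Matrix.of x - Matrix.of y) ^ 2 := by
        rw [frob, Real.sq_sqrt (by positivity)]; rfl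
      dsimp only
      rw [hsq]
      set δ := frob (Matrix.of x - Matrix.of y)
      have h1 : lam * u ≤ lam * (N y + 2 * δ) := by gcongr
      have h2 : d / 4 * δ ^ 2 - 2 * lam * δ + 4 * lam ^ 2 / d = d * (δ / 2 - 2 * lam / d) ^ 2 := by
        field_simp; ring
      have h3 : 0 ≤ d * (δ / 2 - 2 * lam / d) ^ 2 := by positivity
      linarith
    · simp [Set.indicator_of_notMem hx]

/-- for Gaussian `R` with i.i.d. `N(0, 1/d)` entries, with probability at least
`1 − exp(−t²/2)` every minimizer `X` of the k-means cost on `Ψ = H R` satisfies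
`C_Φ ≤ ‖Φ − X Xᵀ Φ‖_F ≤ C_Φ + 2√(k/d)(√k + t)`; the lower bound holds surely. -/
theorem statement4 {n k d : ℕ} (hnk : k ≤ n) (hkd : k ≤ d) (t : ℝ) (ht : 0 ≤ t)
    (U : Matrix (Fin n) (Fin n) ℝ) (hU : Uᵀ * U = 1)
    (Φ : Matrix (Fin n) (Fin k) ℝ) (hΦ : Φ = U * rectId n k)
    (XΦ : Matrix (Fin n) (Fin k) ℝ) (hXΦ : IsOptAssign Φ XΦ) :
    (∀ R : Fin n → Fin d → ℝ, ∀ X : Matrix (Fin n) (Fin k) ℝ,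
        IsOptAssign (Φ * Φᵀ * Matrix.of R) X → kmeansCost Φ XΦ ≤ kmeansCost Φ X) ∧
    ENNReal.ofReal (1 - Real.exp (-t ^ 2 / 2)) ≤
      gaussMeasure n d {R | ∀ X : Matrix (Fin n) (Fin k) ℝ,
        IsOptAssign (Φ * Φᵀ * Matrix.of R) X →
          kmeansCost Φ X ≤ kmeansCost Φ XΦ +
            2 * Real.sqrt ((k : ℝ) / d) * (Real.sqrt k + t)} := by
  have hprob : IsProbabilityMeasure (gaussMeasure n d) := by unfold gaussMeasure; infer_instance
  refine ⟨fun R X hX => hXΦ.2 X hX.1, ?_⟩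
  rcases Nat.lt_or_ge k 2 with hk | hk
  · -- trivial cases
    have huniv : {R : Fin n → Fin d → ℝ | ∀ X : Matrix (Fin n) (Fin k) ℝ,
        IsOptAssign (Φ * Φᵀ * Matrix.of R) X →
          kmeansCost Φ X ≤ kmeansCost Φ XΦ +
            2 * Real.sqrt ((k : ℝ) / d) * (Real.sqrt k + t)} = Set.univ := by
      refine Set.eq_univ_of_forall fun R X hX => ?_
      have hsub : Subsingleton (Fin k) := by
        interval_cases k <;> infer_instance
      obtain ⟨⟨f, hf, hX⟩, -⟩ := hX
      obtain ⟨⟨g, hg, hY⟩, -⟩ := hXΦ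
      have hfg : f = g := Subsingleton.elim _ _
      have : X = XΦ := by
        ext i j
        rw [hX, hY, hfg]
      rw [this]
      have : 0 ≤ 2 * Real.sqrt ((k : ℝ) / d) * (Real.sqrt k + t) := by positivity
      linarith
    rw [huniv, measure_univ]
    apply ENNReal.ofReal_le_one.2
    linarith [Real.exp_pos (-t ^ 2 / 2)]
  have hd : d ≠ 0 := by omega
  have hd0 : (0 : ℝ) < d := by positivity
  have hk0 : (2 : ℝ) ≤ k := by exact_mod_cast hk
  have hΦo := orth_phi hnk U hU Φ hΦ
  set B := Φ - XΦ * XΦᵀ * Φ with hB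
  obtain ⟨m, hm⟩ : ∃ m : ℝ, m = 2 * Real.sqrt ((k : ℝ) / d) * Real.sqrt k := ⟨_, rfl⟩
  have hmpos : 0 < m := by
    have : (0 : ℝ) < k := by linarith
    rw [hm]; positivity
  have hm2 : m ^ 2 = 4 * k ^ 2 / d := by
    rw [hm, mul_pow, mul_pow, Real.sq_sqrt (by positivity), Real.sq_sqrt (by positivity)]
    ring
  obtain ⟨hNint, hNle⟩ := bndN_int (d := d) hd Φ B hΦo m hmpos hm2
  have hNmeas : Measurable (bndN (d := d) Φ B m) := by
    have : Continuous (bndN (d := d) Φ B m) := by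
      unfold bndN
      simp only [frob, Matrix.trace, Matrix.diag, Matrix.mul_apply, errM, Matrix.sub_apply,
        Matrix.of_apply, Matrix.transpose_apply]
      fun_prop
    exact this.measurable
  obtain ⟨bad, hbm, hbmem, hbound⟩ := bad_bound hd _ hNmeas hNint m
    (2 * Real.sqrt ((k : ℝ) / d) * (Real.sqrt k + t)) (2 * Real.sqrt ((k : ℝ) / d) * t)
    (by positivity) (by rw [hm]; ring) hNle
  have hsub : badᶜ ⊆ {R : Fin n → Fin d → ℝ | ∀ X : Matrix (Fin n) (Fin k) ℝ,
        IsOptAssign (Φ * Φᵀ * Matrix.of R) X →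
          kmeansCost Φ X ≤ kmeansCost Φ XΦ +
            2 * Real.sqrt ((k : ℝ) / d) * (Real.sqrt k + t)} := by
    intro x hx X hX
    by_contra hcon
    push Not at hcon
    refine hx (hbmem x fun y => ?_)
    have hXo := indicator_orth X hX.1
    have hYo := indicator_orth XΦ hXΦ.1
    have h1 := hX.2 XΦ hXΦ.1
    have h2 := cost_lip Φ X hΦo hXo (Matrix.of y) (Matrix.of x)
    have h3 := cost_lip Φ XΦ hΦo hYo (Matrix.of x) (Matrix.of y)
    have h4 := cost_lower Φ X hΦo hXo (Matrix.of y)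
    have h5 := cost_upper B (Φᵀ * Matrix.of y)
    rw [hB, ← cost_eq, ← hB] at h5
    have h6 : kmeansCost Φ XΦ = frob B := rfl
    have h7 : frob (Matrix.of y - Matrix.of x) = frob (Matrix.of x - Matrix.of y) := by
      rw [← frob_neg, neg_sub]
    have h8 : frob (errM Φ y) ≤ frob (errM Φ y) ^ 2 / (2 * m) + m / 2 := by
      have : frob (errM Φ y) ^ 2 / (2 * m) + m / 2 - frob (errM Φ y) =
          (frob (errM Φ y) - m) ^ 2 / (2 * m) := by field_simp; ring
      have : 0 ≤ (frob (errM Φ y) - m) ^ 2 / (2 * m) := by positivity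
      linarith
    rw [← errM] at h4 h5
    unfold bndN
    linarith
  refine le_trans ?_ (measure_mono hsub)
  rw [prob_compl_eq_one_sub hbm, ENNReal.ofReal_sub _ (Real.exp_pos _).le, ENNReal.ofReal_one]
  refine tsub_le_tsub_left (hbound.trans (ENNReal.ofReal_le_ofReal (Real.exp_le_exp.2 ?_))) 1
  rw [mul_pow, mul_pow, Real.sq_sqrt (by positivity)]
  have : (d : ℝ) * (2 ^ 2 * (k / d) * t ^ 2) / 16 = k * t ^ 2 / 4 := by field_simp; ring
  rw [this]
  nlinarith [sq_nonneg t]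
end
end

section
/- Let n ≥ k, d ≥ k, and let R ∈ ℝ^{n×d} be a random matrix whose entries are independent Gaussian random variables with mean 0 and variance 1/d. For every t ≥ 0, with probability at least 1 − exp(−t²/2), there exists an orthogonal matrix Q ∈ ℝ^{d×d} such that ‖Ψ − Φ I_{k×d} Q‖_F ≤ √(k/d)·(√k + t), where Ψ = H R. -/
open Matrix MeasureTheory ProbabilityTheory Finset

noncomputable section

lemma bm_compact {A B : Set ℝ} (hA : IsCompact A) (hB : IsCompact B) (hA0 : A.Nonempty)
    (hB0 : B.Nonempty) {C : Set ℝ} (hC : ∀ x ∈ A, ∀ y ∈ B, x + y ∈ C) :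
    volume A + volume B ≤ volume C := by
  have ha := hA.sSup_mem hA0
  have hb := hB.sInf_mem hB0
  set a := sSup A
  set b := sInf B
  have h1 : volume ((fun x => x + b) '' A) = volume A := by
    simp
  have h2 : volume ((fun x => a + x) '' B) = volume B := by
    simp
  have hd : AEDisjoint volume ((fun x => x + b) '' A) ((fun x => a + x) '' B) := by
    refine measure_mono_null (t := {a + b}) ?_ (by simp)
    rintro z ⟨⟨x, hx, rfl⟩, ⟨y, hy, hxy⟩⟩
    have := le_csSup hA.bddAbove hx
    have := csInf_le hB.bddBelow hy
    simp only at hxy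
    simp only [Set.mem_singleton_iff]
    change x ≤ a at *
    change b ≤ y at *
    linarith
  have hm : NullMeasurableSet ((fun x => a + x) '' B) volume :=
    (hB.image (by fun_prop)).measurableSet.nullMeasurableSet
  rw [← h1, ← h2, ← measure_union₀ hm hd]
  apply measure_mono
  rintro z (⟨x, hx, rfl⟩ | ⟨x, hx, rfl⟩)
  · exact hC _ hx _ hb
  · exact hC _ ha _ hx

lemma bm_meas {A B C : Set ℝ} (hA : MeasurableSet A) (hB : MeasurableSet B) (hA0 : A.Nonempty)
    (hB0 : B.Nonempty) {t s : ℝ} (ht : 0 < t) (hs : 0 < s)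
    (hC : ∀ x ∈ A, ∀ y ∈ B, t * x + s * y ∈ C) :
    ENNReal.ofReal t * volume A + ENNReal.ofReal s * volume B ≤ volume C := by
  have key : ∀ K ⊆ A, IsCompact K → ∀ L ⊆ B, IsCompact L →
      ENNReal.ofReal t * volume K + ENNReal.ofReal s * volume L ≤ volume C := by
    intro K hK hKc L hL hLc
    obtain ⟨a, ha⟩ := hA0
    obtain ⟨b, hb⟩ := hB0
    have h := bm_compact (A := (fun x => t * x) '' (insert a K)) (B := (fun x => s * x) '' (insert b L))
      ((hKc.insert a).image (by fun_prop)) ((hLc.insert b).image (by fun_prop))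
      (by simp) (by simp) (C := C) (by
        rintro _ ⟨x, hx, rfl⟩ _ ⟨y, hy, rfl⟩
        refine hC x ?_ y ?_
        · rcases hx with rfl | hx
          exacts [ha, hK hx]
        · rcases hy with rfl | hy
          exacts [hb, hL hy])
    have e1 : ∀ (r : ℝ) (hr : 0 < r) (S : Set ℝ), volume ((fun x => r * x) '' S) = ENNReal.ofReal r * volume S := by
      intro r hr S
      have := Measure.addHaar_smul (volume : Measure ℝ) r S
      simpa [abs_of_pos hr, ← Set.image_smul] using this
    rw [e1 t ht, e1 s hs] at h
    refine le_trans ?_ h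
    gcongr <;> exact Set.subset_insert _ _
  rw [hA.measure_eq_iSup_isCompact, hB.measure_eq_iSup_isCompact]
  simp only [ENNReal.mul_iSup, iSup_and']
  refine ENNReal.biSup_add_biSup_le' ⟨∅, by simp⟩ ⟨∅, by simp⟩ ?_
  rintro K ⟨hK, hKc⟩ L' ⟨hL, hLc⟩
  exact key K hK hKc L' hL hLc

lemma pl_unit {f g h : ℝ → ℝ} (hf : Measurable f) (hg : Measurable g) (hh : Measurable h)
    (f0 : ∀ x, 0 ≤ f x) (g0 : ∀ x, 0 ≤ g x) (h0 : ∀ x, 0 ≤ h x)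
    (f1 : ∀ x, f x ≤ 1) (g1 : ∀ x, g x ≤ 1)
    (fs : ∀ r < 1, ∃ x, r < f x) (gs : ∀ r < 1, ∃ x, r < g x)
    {t s : ℝ} (ht : 0 < t) (hs : 0 < s) (hts : t + s = 1)
    (H : ∀ x y, f x ^ t * g y ^ s ≤ h (t * x + s * y)) :
    ENNReal.ofReal t * (∫⁻ x, ENNReal.ofReal (f x)) +
      ENNReal.ofReal s * (∫⁻ x, ENNReal.ofReal (g x))
      ≤ ∫⁻ x, ENNReal.ofReal (h x) := by
  rw [lintegral_eq_lintegral_meas_lt volume (ae_of_all _ f0) hf.aemeasurable,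
    lintegral_eq_lintegral_meas_lt volume (ae_of_all _ g0) hg.aemeasurable,
    lintegral_eq_lintegral_meas_lt volume (ae_of_all _ h0) hh.aemeasurable]
  have mf : Measurable fun r : ℝ => volume {a : ℝ | r < f a} :=
    Antitone.measurable fun a b hab => measure_mono fun x hx => lt_of_le_of_lt hab hx
  have mg : Measurable fun r : ℝ => volume {a : ℝ | r < g a} :=
    Antitone.measurable fun a b hab => measure_mono fun x hx => lt_of_le_of_lt hab hx
  rw [← lintegral_const_mul _ mf, ← lintegral_const_mul _ mg, ← lintegral_add_left (mf.const_mul _)]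
  refine setLIntegral_mono' measurableSet_Ioi fun r hr => ?_
  have hr : 0 < r := hr
  by_cases hr1 : r < 1
  · refine bm_meas (measurableSet_lt measurable_const hf) (measurableSet_lt measurable_const hg)
      (fs r hr1) (gs r hr1) ht hs ?_
    intro x hx y hy
    refine lt_of_lt_of_le ?_ (H x y)
    have e : r = r ^ t * r ^ s := by rw [← Real.rpow_add hr, hts, Real.rpow_one]
    calc r = r ^ t * r ^ s := e
      _ < f x ^ t * g y ^ s := by
        have hx : r < f x := hx
        have hy : r < g y := hy
        have := Real.rpow_lt_rpow hr.le hx ht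
        have := Real.rpow_lt_rpow hr.le hy hs
        have := Real.rpow_pos_of_pos hr t
        have := Real.rpow_pos_of_pos hr s
        gcongr
  · have e1 : {a : ℝ | r < f a} = ∅ := by
      ext x; simp; linarith [f1 x, not_lt.1 hr1]
    have e2 : {a : ℝ | r < g a} = ∅ := by
      ext x; simp; linarith [g1 x, not_lt.1 hr1]
    simp [e1, e2]

lemma ennreal_amgm {t s : ℝ} (ht : 0 < t) (hs : 0 < s) (hts : t + s = 1) (a b : ENNReal) :
    a ^ t * b ^ s ≤ ENNReal.ofReal t * a + ENNReal.ofReal s * b := by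
  rcases eq_or_ne a ⊤ with rfl | ha
  · simp [ENNReal.mul_top, ht]
  rcases eq_or_ne b ⊤ with rfl | hb
  · simp [ENNReal.mul_top, hs]
  lift a to NNReal using ha
  lift b to NNReal using hb
  have := NNReal.geom_mean_le_arith_mean2_weighted ⟨t, ht.le⟩ ⟨s, hs.le⟩ a b (NNReal.eq hts)
  rw [← ENNReal.coe_rpow_of_nonneg _ ht.le, ← ENNReal.coe_rpow_of_nonneg _ hs.le,
    ENNReal.ofReal_eq_coe_nnreal ht.le, ENNReal.ofReal_eq_coe_nnreal hs.le]
  exact_mod_cast this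

lemma pl_real_s5 {f g h : ℝ → ℝ} (hf : Measurable f) (hg : Measurable g) (hh : Measurable h)
    (f0 : ∀ x, 0 ≤ f x) (g0 : ∀ x, 0 ≤ g x) (h0 : ∀ x, 0 ≤ h x)
    (fb : BddAbove (Set.range f)) (gb : BddAbove (Set.range g))
    {t s : ℝ} (ht : 0 < t) (hs : 0 < s) (hts : t + s = 1)
    (H : ∀ x y, f x ^ t * g y ^ s ≤ h (t * x + s * y)) :
    (∫⁻ x, ENNReal.ofReal (f x)) ^ t * (∫⁻ x, ENNReal.ofReal (g x)) ^ s
      ≤ ∫⁻ x, ENNReal.ofReal (h x) := by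
  by_cases hfz : ∀ x, f x = 0
  · simp [hfz, ht]
  by_cases hgz : ∀ x, g x = 0
  · simp [hgz, hs]
  push Not at hfz hgz
  obtain ⟨x0, hx0⟩ := hfz
  obtain ⟨y0, hy0⟩ := hgz
  set a := sSup (Set.range f) with ha
  set b := sSup (Set.range g) with hb
  have fa : ∀ x, f x ≤ a := fun x => le_csSup fb ⟨x, rfl⟩
  have ga : ∀ x, g x ≤ b := fun x => le_csSup gb ⟨x, rfl⟩
  have a0 : 0 < a := lt_of_lt_of_le (lt_of_le_of_ne (f0 x0) hx0.symm) (fa x0)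
  have b0 : 0 < b := lt_of_lt_of_le (lt_of_le_of_ne (g0 y0) hy0.symm) (ga y0)
  have c0 : 0 < a ^ t * b ^ s := mul_pos (Real.rpow_pos_of_pos a0 _) (Real.rpow_pos_of_pos b0 _)
  have sup : ∀ (φ : ℝ → ℝ) (c : ℝ), 0 < c → c = sSup (Set.range φ) → ∀ r < 1, ∃ x, r < φ x / c := by
    intro φ c hc e r hr
    obtain ⟨_, ⟨x, rfl⟩, hx⟩ := exists_lt_of_lt_csSup (s := Set.range φ) (b := r * c)
      (Set.range_nonempty _) (by rw [← e]; nlinarith)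
    exact ⟨x, by rwa [lt_div_iff₀ hc]⟩
  have key := pl_unit (f := fun x => f x / a) (g := fun x => g x / b)
    (h := fun x => h x / (a ^ t * b ^ s)) (hf.div_const _) (hg.div_const _) (hh.div_const _)
    (fun x => div_nonneg (f0 x) a0.le) (fun x => div_nonneg (g0 x) b0.le)
    (fun x => div_nonneg (h0 x) c0.le) (fun x => (div_le_one a0).2 (fa x))
    (fun x => (div_le_one b0).2 (ga x)) (sup f a a0 ha) (sup g b b0 hb) ht hs hts (by
      intro x y
      rw [Real.div_rpow (f0 x) a0.le, Real.div_rpow (g0 y) b0.le, div_mul_div_comm]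
      exact div_le_div_of_nonneg_right (H x y) c0.le)
  have key2 := (ennreal_amgm ht hs hts _ _).trans key
  have e : ∀ (φ : ℝ → ℝ) (c : ℝ), Measurable φ → 0 < c → ∫⁻ x, ENNReal.ofReal (φ x / c) =
      (∫⁻ x, ENNReal.ofReal (φ x)) / ENNReal.ofReal c := by
    intro φ c hφ hc
    simp_rw [ENNReal.ofReal_div_of_pos hc, div_eq_mul_inv]
    rw [lintegral_mul_const _ hφ.ennreal_ofReal]
  rw [e f a hf a0, e g b hg b0, e h _ hh c0, ENNReal.div_rpow_of_nonneg _ _ ht.le,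
    ENNReal.div_rpow_of_nonneg _ _ hs.le, ENNReal.ofReal_mul (Real.rpow_nonneg a0.le _),
    ← ENNReal.ofReal_rpow_of_pos a0, ← ENNReal.ofReal_rpow_of_pos b0] at key2
  have A1 : ENNReal.ofReal a ^ t ≠ 0 := by
    rw [ENNReal.ofReal_rpow_of_pos a0]; simpa using Real.rpow_pos_of_pos a0 t
  have B1 : ENNReal.ofReal b ^ s ≠ 0 := by
    rw [ENNReal.ofReal_rpow_of_pos b0]; simpa using Real.rpow_pos_of_pos b0 s
  have A2 : ENNReal.ofReal a ^ t ≠ ⊤ := by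
    rw [ENNReal.ofReal_rpow_of_pos a0]; simp
  have B2 : ENNReal.ofReal b ^ s ≠ ⊤ := by
    rw [ENNReal.ofReal_rpow_of_pos b0]; simp
  rw [← ENNReal.mul_div_mul_comm (Or.inl A1) (Or.inl A2)] at key2
  have AB1 := mul_ne_zero A1 B1
  have AB2 := ENNReal.mul_ne_top A2 B2
  rwa [ENNReal.div_le_iff AB1 AB2, ENNReal.div_mul_cancel AB1 AB2] at key2

/-- Bounded extended nonnegative functions. -/
def EBdd {Ω : Type*} (f : Ω → ENNReal) : Prop := ∃ M : NNReal, ∀ x, f x ≤ M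

/-- A Prékopa-Leindler inequality with a transport cost. -/
def PLP {Ω : Type*} [MeasurableSpace Ω] [AddCommGroup Ω] [Module ℝ Ω] (t s : ℝ)
    (μ : Measure Ω) (c : Ω → ℝ) : Prop :=
  ∀ f g h : Ω → ENNReal, Measurable f → Measurable g → Measurable h → EBdd f → EBdd g → EBdd h →
    (∀ x y, f x ^ t * g y ^ s ≤ h (t • x + s • y) * ENNReal.ofReal (Real.exp (c (x - y)))) →
    (∫⁻ x, f x ∂μ) ^ t * (∫⁻ x, g x ∂μ) ^ s ≤ ∫⁻ x, h x ∂μ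

lemma pdf_id {v : NNReal} (hv : v ≠ 0) {t s : ℝ} (hts : t + s = 1) (x y : ℝ) :
    gaussianPDFReal 0 v x ^ t * gaussianPDFReal 0 v y ^ s * Real.exp (t * s / (2 * v) * (x - y) ^ 2)
      = gaussianPDFReal 0 v (t * x + s * y) := by
  have hv' : (0 : ℝ) < v := lt_of_le_of_ne v.2 (by exact_mod_cast hv.symm)
  have hc : 0 < (√(2 * Real.pi * v))⁻¹ := by positivity
  simp only [gaussianPDFReal, sub_zero]
  rw [Real.mul_rpow hc.le (Real.exp_nonneg _), Real.mul_rpow hc.le (Real.exp_nonneg _),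
    ← Real.exp_mul, ← Real.exp_mul]
  have e : ((√(2 * Real.pi * v))⁻¹) ^ t * ((√(2 * Real.pi * v))⁻¹) ^ s = (√(2 * Real.pi * v))⁻¹ := by
    rw [← Real.rpow_add hc, hts, Real.rpow_one]
  calc _ = (((√(2 * Real.pi * v))⁻¹) ^ t * ((√(2 * Real.pi * v))⁻¹) ^ s) *
        (Real.exp (-x ^ 2 / (2 * v) * t) * Real.exp (-y ^ 2 / (2 * v) * s) *
          Real.exp (t * s / (2 * v) * (x - y) ^ 2)) := by ring
    _ = _ := by
      rw [e, ← Real.exp_add, ← Real.exp_add]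
      congr 2
      obtain rfl : s = 1 - t := by linarith
      field_simp
      ring

lemma plp_gauss {v : NNReal} (hv : v ≠ 0) {t s : ℝ} (ht : 0 < t) (hs : 0 < s) (hts : t + s = 1) :
    PLP t s (gaussianReal 0 v) (fun u => t * s / (2 * v) * u ^ 2) := by
  intro f g h hf hg hh ⟨Mf, bf⟩ ⟨Mg, bg⟩ ⟨Mh, bh⟩ H
  have E : ∀ φ : ℝ → ENNReal, Measurable φ → (∀ x, φ x ≠ ⊤) → ∫⁻ x, φ x ∂(gaussianReal 0 v) =
      ∫⁻ x, ENNReal.ofReal ((φ x).toReal * gaussianPDFReal 0 v x) := by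
    intro φ hφ hfin
    rw [gaussianReal_of_var_ne_zero _ hv,
      lintegral_withDensity_eq_lintegral_mul _ (measurable_gaussianPDF 0 v) hφ]
    refine lintegral_congr fun x => ?_
    rw [ENNReal.ofReal_mul ENNReal.toReal_nonneg, ENNReal.ofReal_toReal (hfin x), mul_comm]
    rfl
  have ff : ∀ x, f x ≠ ⊤ := fun x => ne_top_of_le_ne_top ENNReal.coe_ne_top (bf x)
  have gf : ∀ x, g x ≠ ⊤ := fun x => ne_top_of_le_ne_top ENNReal.coe_ne_top (bg x)
  have hf' : ∀ x, h x ≠ ⊤ := fun x => ne_top_of_le_ne_top ENNReal.coe_ne_top (bh x)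
  have pm := measurable_gaussianPDFReal 0 v
  have p0 := gaussianPDFReal_nonneg 0 v
  have pb : ∀ x, gaussianPDFReal 0 v x ≤ (√(2 * Real.pi * v))⁻¹ := by
    intro x
    simp only [gaussianPDFReal]
    refine mul_le_of_le_one_right (by positivity) ?_
    rw [Real.exp_le_one_iff]
    exact div_nonpos_of_nonpos_of_nonneg (by nlinarith [sq_nonneg (x - 0)]) (by positivity)
  have bd : ∀ (φ : ℝ → ENNReal) (M : NNReal), (∀ x, φ x ≤ M) →
      BddAbove (Set.range fun x => (φ x).toReal * gaussianPDFReal 0 v x) := by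
    intro φ M hM
    refine ⟨M * (√(2 * Real.pi * v))⁻¹, ?_⟩
    rintro _ ⟨x, rfl⟩
    have : (φ x).toReal ≤ M := ENNReal.toReal_le_coe_of_le_coe (hM x)
    exact mul_le_mul this (pb x) (p0 x) M.2
  rw [E f hf ff, E g hg gf, E h hh hf']
  refine pl_real_s5 (hf.ennreal_toReal.mul pm) (hg.ennreal_toReal.mul pm) (hh.ennreal_toReal.mul pm)
    (fun x => mul_nonneg ENNReal.toReal_nonneg (p0 x))
    (fun x => mul_nonneg ENNReal.toReal_nonneg (p0 x))
    (fun x => mul_nonneg ENNReal.toReal_nonneg (p0 x)) (bd f Mf bf) (bd g Mg bg) ht hs hts ?_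
  intro x y
  have h1 := ENNReal.toReal_mono (ENNReal.mul_ne_top (hf' _) ENNReal.ofReal_ne_top) (H x y)
  rw [ENNReal.toReal_mul, ENNReal.toReal_mul, ENNReal.toReal_ofReal (Real.exp_nonneg _),
    ← ENNReal.toReal_rpow, ← ENNReal.toReal_rpow] at h1
  simp only [smul_eq_mul] at h1
  simp only [Pi.mul_apply]
  rw [Real.mul_rpow ENNReal.toReal_nonneg (p0 x), Real.mul_rpow ENNReal.toReal_nonneg (p0 y),
    ← pdf_id hv hts x y]
  have h2 : 0 ≤ gaussianPDFReal 0 v x ^ t * gaussianPDFReal 0 v y ^ s :=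
    mul_nonneg (Real.rpow_nonneg (p0 x) _) (Real.rpow_nonneg (p0 y) _)
  have := mul_le_mul_of_nonneg_right h1 h2
  nlinarith [this]

lemma ebdd_lintegral {Ω Ω' : Type*} [MeasurableSpace Ω] (μ : Measure Ω) [IsProbabilityMeasure μ]
    {f : Ω → Ω' → ENNReal} {M : NNReal} (h : ∀ x y, f x y ≤ M) : EBdd fun y => ∫⁻ x, f x y ∂μ := by
  refine ⟨M, fun y => ?_⟩
  calc ∫⁻ x, f x y ∂μ ≤ ∫⁻ x, M ∂μ := lintegral_mono fun x => h x y
    _ = M := by simp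

lemma plp_prod {Ω₁ Ω₂ : Type*} [MeasurableSpace Ω₁] [AddCommGroup Ω₁] [Module ℝ Ω₁]
    [MeasurableSpace Ω₂] [AddCommGroup Ω₂] [Module ℝ Ω₂] {t s : ℝ} {μ : Measure Ω₁} {ν : Measure Ω₂}
    [IsProbabilityMeasure μ] [IsProbabilityMeasure ν] {c₁ : Ω₁ → ℝ} {c₂ : Ω₂ → ℝ}
    (h₁ : PLP t s μ c₁) (h₂ : PLP t s ν c₂) :
    PLP t s (μ.prod ν) (fun p => c₁ p.1 + c₂ p.2) := by
  intro f g h hf hg hh ⟨Mf, bf⟩ ⟨Mg, bg⟩ ⟨Mh, bh⟩ H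
  rw [lintegral_prod_symm _ hf.aemeasurable, lintegral_prod_symm _ hg.aemeasurable,
    lintegral_prod_symm _ hh.aemeasurable]
  refine h₂ _ _ _ hf.lintegral_prod_left' hg.lintegral_prod_left' hh.lintegral_prod_left'
    (ebdd_lintegral μ (f := fun x y => f (x, y)) fun x y => bf _)
    (ebdd_lintegral μ (f := fun x y => g (x, y)) fun x y => bg _)
    (ebdd_lintegral μ (f := fun x y => h (x, y)) fun x y => bh _) ?_
  intro x₂ y₂
  rw [← lintegral_mul_const _ (by fun_prop)]
  refine h₁ (fun x => f (x, x₂)) (fun x => g (x, y₂)) (fun x => h (x, t • x₂ + s • y₂) * _)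
    (by fun_prop) (by fun_prop) (by fun_prop) ⟨Mf, fun x => bf _⟩ ⟨Mg, fun x => bg _⟩
    ⟨Mh * (Real.exp (c₂ (x₂ - y₂))).toNNReal, fun x => ?_⟩ ?_
  · rw [ENNReal.coe_mul]
    exact mul_le_mul' (bh _) le_rfl
  · intro x y
    refine (H (x, x₂) (y, y₂)).trans ?_
    simp only [Prod.fst_sub, Prod.snd_sub, Prod.smul_mk, Prod.mk_add_mk]
    rw [Real.exp_add, ENNReal.ofReal_mul (Real.exp_nonneg _), mul_assoc,
      mul_comm (ENNReal.ofReal (Real.exp (c₁ _)))]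

lemma plp_pi {Ω : Type*} [MeasurableSpace Ω] [AddCommGroup Ω] [Module ℝ Ω] {t s : ℝ}
    {μ : Measure Ω} [IsProbabilityMeasure μ] {c : Ω → ℝ} (h : PLP t s μ c) (m : ℕ) :
    PLP t s (Measure.pi fun _ : Fin m => μ) (fun x => ∑ i, c (x i)) := by
  induction m with
  | zero =>
    intro f g h hf hg hh _ _ _ H
    have := H default default
    rw [Subsingleton.elim (t • (default : Fin 0 → Ω) + s • default) default] at this
    simp only [lintegral_unique]
    simpa using this
  | succ m ih =>
    intro f g k hf hg hk ⟨Mf, bf⟩ ⟨Mg, bg⟩ ⟨Mh, bh⟩ H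
    have mp := (measurePreserving_piFinSuccAbove (fun _ : Fin (m + 1) => μ) 0).symm
    set e := (MeasurableEquiv.piFinSuccAbove (fun _ : Fin (m + 1) => Ω) 0).symm with he
    have ee : ∀ p : Ω × (Fin m → Ω), e p = Fin.cons p.1 p.2 := by
      intro p
      simp [he, MeasurableEquiv.piFinSuccAbove_symm_apply, Fin.insertNthEquiv]
    rw [← mp.lintegral_comp hf, ← mp.lintegral_comp hg, ← mp.lintegral_comp hk]
    refine plp_prod h ih _ _ _ (hf.comp e.measurable) (hg.comp e.measurable) (hk.comp e.measurable)
      ⟨Mf, fun x => bf _⟩ ⟨Mg, fun x => bg _⟩ ⟨Mh, fun x => bh _⟩ ?_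
    intro x y
    have e1 : t • e x + s • e y = e (t • x + s • y) := by
      simp only [ee]
      ext j
      refine Fin.cases ?_ (fun j => ?_) j <;> simp
    have := H (e x) (e y)
    rw [e1] at this
    simpa [ee, Fin.sum_univ_succ] using this

lemma conc_mgf {Ω : Type*} [MeasurableSpace Ω] [AddCommGroup Ω] [Module ℝ Ω] {v : ℝ} (hv : 0 < v)
    {μ : Measure Ω} [IsProbabilityMeasure μ] {q : Ω → ℝ} (q0 : ∀ x, 0 ≤ q x)
    (qs : ∀ (r : ℝ) x, q (r • x) = r ^ 2 * q x)
    (H : ∀ t s : ℝ, 0 < t → 0 < s → t + s = 1 → PLP t s μ (fun x => t * s / (2 * v) * q x))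
    {F : Ω → ℝ} (Fm : Measurable F) (F0 : ∀ x, 0 ≤ F x) {M : ℝ} (FM : ∀ x, F x ≤ M)
    (FL : ∀ x y, F x ≤ F y + √(q (x - y))) {l : ℝ} (l0 : 0 ≤ l) :
    Integrable (fun x => Real.exp (l * F x)) μ ∧
    ∫ x, Real.exp (l * F x) ∂μ ≤ Real.exp (l ^ 2 * v / 2 + l * ∫ x, F x ∂μ) := by
  obtain ⟨x0⟩ : Nonempty Ω := ⟨0⟩
  have M0 : 0 ≤ M := (F0 x0).trans (FM x0)
  have Fi : Integrable F μ := by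
    refine Integrable.of_bound Fm.aestronglyMeasurable M (ae_of_all _ fun x => ?_)
    rw [Real.norm_of_nonneg (F0 x)]; exact FM x
  have ei : ∀ r : ℝ, 0 ≤ r → Integrable (fun x => Real.exp (r * F x)) μ := by
    intro r hr
    refine Integrable.of_bound (by fun_prop) (Real.exp (r * M)) (ae_of_all _ fun x => ?_)
    rw [Real.norm_of_nonneg (Real.exp_nonneg _)]
    gcongr; exact FM x
  refine ⟨ei l l0, ?_⟩
  set A := ∫ x, Real.exp (l * F x) ∂μ with hA
  set m := ∫ x, F x ∂μ with hm
  have A0 : 0 < A := integral_exp_pos (ei l l0)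
  have key : ∀ t : ℝ, 0 < t → t < 1 → t * (l * M) ≤ 1 →
      Real.log A ≤ l ^ 2 * v / 2 + l * m + t * (l * M) ^ 2 := by
    intro t ht ht1 htM
    set s := 1 - t with hs
    have hs0 : 0 < s := by linarith
    have h1 := H t s ht hs0 (by rw [hs]; ring) (fun x => ENNReal.ofReal (Real.exp (l * F x)))
      (fun _ => 1)
      (fun x => ENNReal.ofReal (Real.exp (t * l * F x) * Real.exp (t * s * l ^ 2 * v / 2)))
      (by fun_prop) (by fun_prop) (by fun_prop)
      ⟨(Real.exp (l * M)).toNNReal, fun x => by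
        refine ENNReal.ofReal_le_ofReal ?_
        have := FM x
        gcongr⟩ ⟨1, fun x => by simp⟩
      ⟨(Real.exp (t * l * M) * Real.exp (t * s * l ^ 2 * v / 2)).toNNReal, fun x => by
        refine ENNReal.ofReal_le_ofReal ?_
        have := FM x
        gcongr⟩ (by
        intro x y
        rw [ENNReal.one_rpow, mul_one, ENNReal.ofReal_rpow_of_pos (Real.exp_pos _),
          ← ENNReal.ofReal_mul (by positivity), ← Real.exp_mul, ← Real.exp_add, ← Real.exp_add]
        apply ENNReal.ofReal_le_ofReal
        apply Real.exp_le_exp.2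
        have h2 := FL x (t • x + s • y)
        have e : x - (t • x + s • y) = s • (x - y) := by
          rw [hs]; module
        rw [e, qs, Real.sqrt_mul (by positivity), Real.sqrt_sq hs0.le] at h2
        have h3 : q (x - y) = √(q (x - y)) ^ 2 := (Real.sq_sqrt (q0 _)).symm
        simp only
        rw [h3]
        set w := √(q (x - y))
        have h4 : t * s * l * w ≤ t * s * l ^ 2 * v / 2 + t * s / (2 * v) * w ^ 2 := by
          have : t * s * l ^ 2 * v / 2 + t * s / (2 * v) * w ^ 2 - t * s * l * w =
            t * s / (2 * v) * (l * v - w) ^ 2 := by field_simp; ring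
          have : 0 ≤ t * s / (2 * v) * (l * v - w) ^ 2 := by positivity
          linarith
        have h5 : t * l * F x ≤ t * l * (F (t • x + s • y) + s * w) := by gcongr
        nlinarith)
    rw [lintegral_const, measure_univ, one_mul, ENNReal.one_rpow, mul_one,
      ← ofReal_integral_eq_lintegral_ofReal (ei l l0) (ae_of_all _ fun x => Real.exp_nonneg _),
      ← ofReal_integral_eq_lintegral_ofReal ((ei (t * l) (by positivity)).mul_const _)
        (ae_of_all _ fun x => by positivity), ENNReal.ofReal_rpow_of_pos A0,
      ENNReal.ofReal_le_ofReal_iff (integral_nonneg fun x => by positivity),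
      integral_mul_const] at h1
    have h2 : ∫ x, Real.exp (t * l * F x) ∂μ ≤ 1 + t * l * m + (t * (l * M)) ^ 2 := by
      calc ∫ x, Real.exp (t * l * F x) ∂μ ≤ ∫ x, (1 + t * l * F x + (t * (l * M)) ^ 2) ∂μ := by
            refine integral_mono (ei (t * l) (by positivity)) ?_ fun x => ?_
            · exact ((integrable_const _).add (Fi.const_mul _)).add (integrable_const _)
            · have a1 : 0 ≤ t * l * F x := by have := F0 x; positivity
              have a2 : t * l * F x ≤ t * (l * M) := by
                rw [mul_assoc]; have := FM x; gcongr
              have := Real.abs_exp_sub_one_sub_id_le (x := t * l * F x)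
                (by rw [abs_of_nonneg a1]; linarith)
              have := (abs_le.1 this).2
              simp only
              nlinarith
        _ = _ := by
            rw [integral_add, integral_add, integral_const_mul]
            · simp [hm]
            · exact integrable_const _
            · exact Fi.const_mul _
            · exact (integrable_const _).add (Fi.const_mul _)
            · exact integrable_const _
    have h3 : ∫ x, Real.exp (t * l * F x) ∂μ ≤ Real.exp (t * l * m + (t * (l * M)) ^ 2) :=
      h2.trans (by linarith [Real.add_one_le_exp (t * l * m + (t * (l * M)) ^ 2)])
    have h4 : A ^ t ≤ Real.exp (t * l * m + (t * (l * M)) ^ 2 + t * s * l ^ 2 * v / 2) := by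
      rw [Real.exp_add]
      exact h1.trans (by gcongr)
    have h5 := Real.log_le_log (Real.rpow_pos_of_pos A0 _) h4
    rw [Real.log_rpow A0, Real.log_exp] at h5
    have h6 : t * Real.log A ≤ t * (l ^ 2 * v / 2 + l * m + t * (l * M) ^ 2) := by
      have : 0 ≤ t * t * l ^ 2 * v := by positivity
      rw [hs] at h5
      nlinarith
    exact le_of_mul_le_mul_left h6 ht
  have fin : Real.log A ≤ l ^ 2 * v / 2 + l * m := by
    have tend : Filter.Tendsto (fun t : ℝ => l ^ 2 * v / 2 + l * m + t * (l * M) ^ 2)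
        (nhdsWithin 0 (Set.Ioi 0)) (nhds (l ^ 2 * v / 2 + l * m + 0 * (l * M) ^ 2)) :=
      (Continuous.tendsto (by fun_prop) 0).mono_left nhdsWithin_le_nhds
    have t2 : Filter.Tendsto (fun t : ℝ => t * (l * M))
        (nhdsWithin 0 (Set.Ioi 0)) (nhds (0 * (l * M))) :=
      (Continuous.tendsto (by fun_prop) 0).mono_left nhdsWithin_le_nhds
    rw [zero_mul, add_zero] at tend
    rw [zero_mul] at t2
    refine ge_of_tendsto tend ?_
    have l1 : ∀ᶠ t : ℝ in nhdsWithin 0 (Set.Ioi 0), t < 1 :=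
      nhdsWithin_le_nhds (Iio_mem_nhds one_pos)
    filter_upwards [self_mem_nhdsWithin, l1, t2.eventually (Iic_mem_nhds one_pos)] with t a b c
    exact key t a b c
  rw [← Real.exp_log A0]
  exact Real.exp_le_exp.2 fin

lemma conc_tail {Ω : Type*} [MeasurableSpace Ω] [AddCommGroup Ω] [Module ℝ Ω] {v : ℝ} (hv : 0 < v)
    {μ : Measure Ω} [IsProbabilityMeasure μ] {q : Ω → ℝ} (q0 : ∀ x, 0 ≤ q x)
    (qs : ∀ (r : ℝ) x, q (r • x) = r ^ 2 * q x)
    (H : ∀ t s : ℝ, 0 < t → 0 < s → t + s = 1 → PLP t s μ (fun x => t * s / (2 * v) * q x))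
    {F : Ω → ℝ} (Fm : Measurable F) (F0 : ∀ x, 0 ≤ F x)
    (FL : ∀ x y, F x ≤ F y + √(q (x - y))) (Fi : Integrable F μ) {m u : ℝ}
    (hm : ∫ x, F x ∂μ ≤ m) (m0 : 0 ≤ m) (hu : 0 ≤ u) :
    μ.real {x | m + u < F x} ≤ Real.exp (- u ^ 2 / (2 * v)) := by
  set M := m + u with hM
  set G : Ω → ℝ := fun x => min (F x) M with hG
  have Gm : Measurable G := Fm.min measurable_const
  have G0 : ∀ x, 0 ≤ G x := fun x => le_min (F0 x) (by positivity)
  have GM : ∀ x, G x ≤ M := fun x => min_le_right _ _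
  have GLip : ∀ x y, G x ≤ G y + √(q (x - y)) := by
    intro x y
    have := FL x y
    have h0 := Real.sqrt_nonneg (q (x - y))
    simp only [hG]
    rcases le_total (F y) M with h | h
    · rw [min_eq_left h]; exact (min_le_left _ _).trans this
    · rw [min_eq_right h]; exact (min_le_right _ _).trans (by linarith)
  have l0 : 0 ≤ u / v := by positivity
  obtain ⟨hi, hb⟩ := conc_mgf hv q0 qs H Gm G0 GM GLip l0
  have Gi : Integrable G μ := by
    refine Integrable.of_bound Gm.aestronglyMeasurable M (ae_of_all _ fun x => ?_)
    rw [Real.norm_of_nonneg (G0 x)]; exact GM x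
  have hGm : ∫ x, G x ∂μ ≤ m := (integral_mono Gi Fi fun x => min_le_left _ _).trans hm
  have ch := measure_ge_le_exp_mul_mgf (μ := μ) (X := G) M l0 hi
  calc μ.real {x | M < F x} ≤ μ.real {x | M ≤ G x} := by
        apply measureReal_mono _ (by simp)
        intro x hx
        exact le_min (show M < F x from hx).le le_rfl
    _ ≤ _ := ch
    _ ≤ Real.exp (-(u / v) * M) * Real.exp ((u / v) ^ 2 * v / 2 + u / v * m) := by
        gcongr
        refine hb.trans (Real.exp_le_exp.2 ?_)
        gcongr
    _ = _ := by
        rw [← Real.exp_add]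
        congr 1
        rw [hM]; field_simp; ring

/-! Part 4: mean of the chi distribution -/

section chi
set_option linter.unusedSectionVars false
variable {V : Type*} [NormedAddCommGroup V] [InnerProductSpace ℝ V] [FiniteDimensional ℝ V]
  [MeasurableSpace V] [BorelSpace V]

def gdens (V : Type*) [NormedAddCommGroup V] [InnerProductSpace ℝ V] (x : V) : ℝ :=
  ((2 * Real.pi) ^ (Module.finrank ℝ V / 2 : ℝ))⁻¹ * Real.exp (-(1/2) * ‖x‖ ^ 2)

lemma gdens_nonneg (x : V) : 0 ≤ gdens V x := by unfold gdens; positivity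

lemma gdens_cont : Continuous (gdens V) := by unfold gdens; fun_prop

lemma gdens_int : ∫ x, gdens V x = 1 := by
  unfold gdens
  rw [integral_const_mul, GaussianFourier.integral_rexp_neg_mul_sq_norm (by norm_num)]
  have : (Real.pi / (1/2)) = 2 * Real.pi := by ring
  rw [this]
  exact inv_mul_cancel₀ (by positivity)

lemma gdens_integrable : Integrable (gdens V) := by
  by_contra h
  have := gdens_int (V := V)
  rw [integral_undef h] at this
  norm_num at this

lemma stdGaussian_eq_withDensity :
    stdGaussian V = (volume : Measure V).withDensity (fun x => ENNReal.ofReal (gdens V x)) := by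
  have : IsProbabilityMeasure
      ((volume : Measure V).withDensity (fun x => ENNReal.ofReal (gdens V x))) := by
    constructor
    rw [withDensity_apply _ MeasurableSet.univ, Measure.restrict_univ,
      ← ofReal_integral_eq_lintegral_ofReal gdens_integrable
        (Filter.Eventually.of_forall gdens_nonneg), gdens_int]
    simp
  apply Measure.ext_of_charFun
  ext w
  rw [charFun_stdGaussian, charFun_apply]
  rw [integral_withDensity_eq_integral_toReal_smul
    (by have := gdens_cont (V := V); fun_prop) (by simp)]
  have h := GaussianFourier.integral_cexp_neg_mul_sq_norm_add (V := V) (b := 1/2) (by norm_num)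
    Complex.I w
  have h2 : ∀ v : V, (ENNReal.ofReal (gdens V v)).toReal • Complex.exp (inner ℝ v w * Complex.I)
      = (((2 * Real.pi) ^ (Module.finrank ℝ V / 2 : ℝ))⁻¹ : ℝ) *
        Complex.exp (-(1/2) * ‖v‖ ^ 2 + Complex.I * inner ℝ w v) := by
    intro v
    rw [ENNReal.toReal_ofReal (gdens_nonneg v), gdens, Complex.exp_add, real_inner_comm]
    simp only [Complex.real_smul]
    push_cast
    ring_nf
  simp_rw [h2]
  rw [integral_const_mul, h]
  have h3 : ((Real.pi : ℂ) / (1/2)) ^ ((Module.finrank ℝ V : ℂ) / 2)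
      = (((2 * Real.pi) ^ (Module.finrank ℝ V / 2 : ℝ) : ℝ) : ℂ) := by
    rw [Complex.ofReal_cpow (by positivity)]
    push_cast
    congr 1
    ring
  rw [h3, ← mul_assoc, ← Complex.ofReal_mul, inv_mul_cancel₀ (by positivity)]
  simp only [Complex.I_sq]
  push_cast
  ring_nf

lemma integral_norm_stdGaussian [Nontrivial V] :
    ∫ x, ‖x‖ ∂(stdGaussian V) = √2 * Real.Gamma ((Module.finrank ℝ V + 1 : ℝ) / 2)
      / Real.Gamma ((Module.finrank ℝ V : ℝ) / 2) := by
  have hm : 0 < Module.finrank ℝ V := Module.finrank_pos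
  set m := Module.finrank ℝ V with hmdef
  have hm' : (0 : ℝ) < m := by exact_mod_cast hm
  rw [stdGaussian_eq_withDensity, integral_withDensity_eq_integral_toReal_smul
    (by have := gdens_cont (V := V); fun_prop) (by simp)]
  set C : ℝ := ((2 * Real.pi) ^ (m / 2 : ℝ))⁻¹ with hC
  have e1 : ∀ x : V, (ENNReal.ofReal (gdens V x)).toReal • ‖x‖
      = (fun r : ℝ => C * Real.exp (-(1/2) * r ^ 2) * r) ‖x‖ := by
    intro x
    rw [ENNReal.toReal_ofReal (gdens_nonneg x)]
    simp [gdens, hC, hmdef]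
  have e2 : ∀ x : V, gdens V x = (fun r : ℝ => C * Real.exp (-(1/2) * r ^ 2)) ‖x‖ := by
    intro x
    simp [gdens, hC, hmdef]
  simp_rw [e1]
  have h1 := gdens_int (V := V)
  rw [integral_congr_ae (Filter.Eventually.of_forall e2),
    integral_fun_norm_addHaar volume (fun r : ℝ => C * Real.exp (-(1/2) * r ^ 2))] at h1
  rw [integral_fun_norm_addHaar volume (fun r : ℝ => C * Real.exp (-(1/2) * r ^ 2) * r)]
  rw [← hmdef] at h1 ⊢
  have i1 : ∫ y in Set.Ioi (0:ℝ), y ^ (m - 1) • (C * Real.exp (-(1/2) * y ^ 2))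
      = C * ((1/2 : ℝ) ^ (-(m:ℝ) / 2) * (1/2) * Real.Gamma ((m:ℝ)/2)) := by
    have := integral_rpow_mul_exp_neg_mul_rpow (p := 2) (q := (m:ℝ) - 1) (b := 1/2) (by norm_num)
      (by linarith) (by norm_num)
    rw [sub_add_cancel] at this
    rw [← this, ← integral_const_mul]
    refine setIntegral_congr_fun measurableSet_Ioi fun y hy => ?_
    simp only [smul_eq_mul]
    rw [show (m:ℝ) - 1 = ((m - 1 : ℕ) : ℝ) by push_cast [Nat.cast_sub hm]; ring, Real.rpow_natCast,
      show (2:ℝ) = ((2:ℕ):ℝ) by norm_num, Real.rpow_natCast]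
    ring
  have i2 : ∫ y in Set.Ioi (0:ℝ), y ^ (m - 1) • (C * Real.exp (-(1/2) * y ^ 2) * y)
      = C * ((1/2 : ℝ) ^ (-((m:ℝ)+1) / 2) * (1/2) * Real.Gamma (((m:ℝ)+1)/2)) := by
    have := integral_rpow_mul_exp_neg_mul_rpow (p := 2) (q := (m:ℝ)) (b := 1/2) (by norm_num)
      (by linarith) (by norm_num)
    rw [← this, ← integral_const_mul]
    refine setIntegral_congr_fun measurableSet_Ioi fun y hy => ?_
    simp only [smul_eq_mul]
    rw [Real.rpow_natCast, show (2:ℝ) = ((2:ℕ):ℝ) by norm_num, Real.rpow_natCast]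
    obtain ⟨p, hp⟩ : ∃ p, m = p + 1 := ⟨m - 1, by omega⟩
    rw [hp]
    simp only [Nat.add_sub_cancel]
    ring
  rw [i1] at h1
  rw [i2]
  have hG : 0 < Real.Gamma ((m:ℝ)/2) := Real.Gamma_pos_of_pos (by positivity)
  have hs : (1/2 : ℝ) ^ (-((m:ℝ)+1) / 2) = (1/2 : ℝ) ^ (-(m:ℝ) / 2) * √2 := by
    rw [show -((m:ℝ)+1) / 2 = -(m:ℝ)/2 + -(1/2) by ring, Real.rpow_add (by norm_num)]
    congr 1
    rw [Real.rpow_neg (by norm_num), ← Real.sqrt_eq_rpow, one_div, Real.sqrt_inv, inv_inv]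
  rw [hs, eq_div_iff hG.ne']
  simp only [smul_eq_mul, nsmul_eq_mul] at h1 ⊢
  linear_combination (√2 * Real.Gamma (((m:ℝ)+1)/2)) * h1

lemma gamma_ratio {m : ℕ} (hm : 0 < m) :
    ((m:ℝ) - 1/2) / √m ≤ √2 * Real.Gamma ((m + 1 : ℝ) / 2) / Real.Gamma ((m : ℝ) / 2) := by
  have hm' : (1 : ℝ) ≤ m := by exact_mod_cast hm
  have hG : 0 < Real.Gamma ((m:ℝ)/2) := Real.Gamma_pos_of_pos (by positivity)
  have hG1 : 0 < Real.Gamma (((m:ℝ)+1)/2) := Real.Gamma_pos_of_pos (by positivity)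
  have h := Real.Gamma_mul_add_mul_le_rpow_Gamma_mul_rpow_Gamma (s := ((m:ℝ)+1)/2)
    (t := ((m:ℝ)+1)/2 + 1) (a := 1/2) (b := 1/2) (by positivity) (by positivity) (by norm_num)
    (by norm_num) (by norm_num)
  rw [show 1/2 * (((m:ℝ)+1)/2) + 1/2 * (((m:ℝ)+1)/2 + 1) = (m:ℝ)/2 + 1 by ring,
    Real.Gamma_add_one (by positivity), Real.Gamma_add_one (by positivity),
    Real.mul_rpow (by positivity) hG1.le, ← Real.sqrt_eq_rpow, ← Real.sqrt_eq_rpow] at h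
  have hsq := Real.mul_self_sqrt hG1.le
  have h' : (m:ℝ)/2 * Real.Gamma ((m:ℝ)/2) ≤ √(((m:ℝ)+1)/2) * Real.Gamma (((m:ℝ)+1)/2) := by
    calc _ ≤ _ := h
      _ = √(((m:ℝ)+1)/2) * (√(Real.Gamma (((m:ℝ)+1)/2)) * √(Real.Gamma (((m:ℝ)+1)/2))) := by ring
      _ = _ := by rw [hsq]
  have hsm : 0 < √(m:ℝ) := Real.sqrt_pos.2 (by linarith)
  rw [div_le_div_iff₀ hsm hG]
  -- key: √(m+1) (m - 1/2) ≤ m √m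
  have key : √((m:ℝ)+1) * ((m:ℝ) - 1/2) ≤ m * √m := by
    apply Real.le_sqrt_of_sq_le _ |>.trans
    rotate_left
    · exact (m:ℝ)^2 * m
    · rw [mul_pow, Real.sq_sqrt (by positivity)]
      nlinarith
    · rw [Real.sqrt_mul (by positivity), Real.sqrt_sq (by positivity)]
  have hs2 : √(((m:ℝ)+1)/2) = √((m:ℝ)+1) / √2 := Real.sqrt_div (by positivity) _
  rw [hs2] at h'
  have h22 : √(2:ℝ) * √2 = 2 := Real.mul_self_sqrt (by norm_num)
  have h2p : 0 < √(2:ℝ) := by positivity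
  have h'' : (m:ℝ) * Real.Gamma ((m:ℝ)/2) ≤ √((m:ℝ)+1) * (√2 * Real.Gamma (((m:ℝ)+1)/2)) := by
    have : √((m:ℝ)+1) / √2 = √((m:ℝ)+1) * √2 / 2 := by
      field_simp
      nlinarith
    rw [this] at h'
    linarith
  have hp1 : 0 < √((m:ℝ)+1) := by positivity
  have : √((m:ℝ)+1) * (((m:ℝ) - 1/2) * Real.Gamma ((m:ℝ)/2))
      ≤ √((m:ℝ)+1) * (√2 * Real.Gamma (((m:ℝ)+1)/2) * √m) := by
    calc _ = (√((m:ℝ)+1) * ((m:ℝ) - 1/2)) * Real.Gamma ((m:ℝ)/2) := by ring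
      _ ≤ (m * √m) * Real.Gamma ((m:ℝ)/2) := by gcongr
      _ = √m * (m * Real.Gamma ((m:ℝ)/2)) := by ring
      _ ≤ √m * (√((m:ℝ)+1) * (√2 * Real.Gamma (((m:ℝ)+1)/2))) := by gcongr
      _ = _ := by ring
  exact le_of_mul_le_mul_left this hp1

lemma chi_mean (hm : 0 < Module.finrank ℝ V) :
    ((Module.finrank ℝ V : ℝ) - 1/2) / √(Module.finrank ℝ V) ≤ ∫ x, ‖x‖ ∂(stdGaussian V) := by
  have : Nontrivial V := Module.nontrivial_of_finrank_pos hm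
  rw [integral_norm_stdGaussian]
  exact gamma_ratio hm

end chi

/-! Part 5: projected rows -/

def rowM (d : ℕ) : Measure (Fin d → ℝ) := Measure.pi fun _ => gaussianReal 0 (d : NNReal)⁻¹

instance (d : ℕ) : IsProbabilityMeasure (rowM d) := by unfold rowM; infer_instance

lemma charFun_rowM (d : ℕ) (w : EuclideanSpace ℝ (Fin d)) :
    charFun ((rowM d).map (WithLp.toLp 2)) w = Complex.exp (-((d:ℝ)⁻¹ * ‖w‖ ^ 2 / 2 : ℝ)) := by
  unfold rowM
  simp_rw [charFun_pi, charFun_gaussianReal, ← Complex.exp_sum, EuclideanSpace.real_norm_sq_eq]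
  congr 1
  push_cast
  simp only [Finset.mul_sum, Finset.sum_div, ← Finset.sum_neg_distrib]
  refine Finset.sum_congr rfl fun i _ => ?_
  ring

lemma row_proj_map (d : ℕ) (W : Submodule ℝ (EuclideanSpace ℝ (Fin d))) :
    (rowM d).map (fun x => W.orthogonalProjectionOnto (WithLp.toLp 2 x))
      = (stdGaussian W).map (fun y => (√(d:ℝ))⁻¹ • y) := by
  have m1 : Measurable (fun x : Fin d → ℝ => (WithLp.toLp 2 x : EuclideanSpace ℝ (Fin d))) := by
    fun_prop
  have m2 : Measurable (fun x : EuclideanSpace ℝ (Fin d) => W.orthogonalProjectionOnto x) := by fun_prop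
  have : IsProbabilityMeasure ((rowM d).map
      (fun x => W.orthogonalProjectionOnto (WithLp.toLp 2 x))) :=
    Measure.isProbabilityMeasure_map (m2.comp m1).aemeasurable
  have : IsProbabilityMeasure ((stdGaussian W).map (fun y => (√(d:ℝ))⁻¹ • y)) :=
    Measure.isProbabilityMeasure_map (by fun_prop)
  apply Measure.ext_of_charFun
  ext w
  rw [charFun_map_smul, charFun_stdGaussian]
  have : charFun ((rowM d).map (fun x => W.orthogonalProjectionOnto (WithLp.toLp 2 x))) w
      = charFun ((rowM d).map (WithLp.toLp 2)) (w : EuclideanSpace ℝ (Fin d)) := by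
    rw [charFun_apply, charFun_apply, integral_map (show Measurable (fun x : Fin d → ℝ =>
      W.orthogonalProjectionOnto (WithLp.toLp 2 x)) from m2.comp m1).aemeasurable
      (by fun_prop), integral_map m1.aemeasurable (by fun_prop)]
    congr 1
    ext x
    rw [Submodule.inner_orthogonalProjectionOnto_eq_of_mem_right]
  rw [this, charFun_rowM, norm_smul]
  congr 1
  simp only [norm_inv, Real.norm_eq_abs, abs_of_nonneg (Real.sqrt_nonneg _),
    Submodule.coe_norm]
  have : ((√(d:ℝ) : ℝ))^2 = d := Real.sq_sqrt (by positivity)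
  push_cast
  have h2 : ((√(d:ℝ) : ℝ) : ℂ)^2 = d := by exact_mod_cast this
  rw [mul_pow, inv_pow, h2]
  ring

lemma row_proj_mean {d : ℕ} (W : Submodule ℝ (EuclideanSpace ℝ (Fin d)))
    (hW : 0 < Module.finrank ℝ W) :
    ((Module.finrank ℝ W : ℝ) - 1/2) / d ≤
      ∫ x, ‖W.orthogonalProjectionOnto (WithLp.toLp 2 x)‖ ∂(rowM d) := by
  have m1 : Measurable (fun x : Fin d → ℝ => W.orthogonalProjectionOnto
      (WithLp.toLp 2 x : EuclideanSpace ℝ (Fin d))) := by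
    fun_prop
  have h := integral_map (μ := rowM d) m1.aemeasurable (f := fun y : W => ‖y‖) (by fun_prop)
  rw [← h, row_proj_map, integral_map (by fun_prop) (by fun_prop)]
  simp_rw [norm_smul]
  rw [integral_const_mul]
  have hc := chi_mean hW
  set m := Module.finrank ℝ W with hm
  have hmd : m ≤ d := by
    have := Submodule.finrank_le W
    simpa using this
  have hm0 : (1:ℝ) ≤ m := by exact_mod_cast hW
  have hmd' : (m:ℝ) ≤ d := by exact_mod_cast hmd
  have hsd : 0 < √(d:ℝ) := Real.sqrt_pos.2 (by linarith)
  have hsm : 0 < √(m:ℝ) := Real.sqrt_pos.2 (by linarith)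
  have hle : √(m:ℝ) ≤ √(d:ℝ) := Real.sqrt_le_sqrt hmd'
  have hn : ‖(√(d:ℝ))⁻¹‖ = (√(d:ℝ))⁻¹ := by
    rw [Real.norm_eq_abs, abs_of_pos (by positivity)]
  rw [hn]
  calc ((m:ℝ) - 1/2) / d = (√(d:ℝ))⁻¹ * (((m:ℝ) - 1/2) / √d) := by
        rw [← Real.mul_self_sqrt (show (0:ℝ) ≤ d by positivity)]
        simp only [Real.sqrt_mul_self hsd.le]
        field_simp
    _ ≤ (√(d:ℝ))⁻¹ * (((m:ℝ) - 1/2) / √m) := by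
        have : (0:ℝ) ≤ m - 1/2 := by linarith
        gcongr
    _ ≤ _ := by gcongr

/-! Part 6: Gram–Schmidt -/

section gs
open InnerProductSpace

lemma gs_mem_orth {d : ℕ} (f : Fin d → EuclideanSpace ℝ (Fin d)) (i : Fin d) :
    gramSchmidt ℝ f i ∈ (Submodule.span ℝ (f '' Set.Iio i))ᗮ := by
  rw [Submodule.mem_orthogonal]
  intro u hu
  induction hu using Submodule.span_induction with
  | mem x hx =>
    obtain ⟨j, hj, rfl⟩ := hx
    rw [real_inner_comm]
    exact gramSchmidt_inv_triangular ℝ f hj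
  | zero => simp
  | add x y _ _ hx hy => rw [inner_add_left, hx, hy, add_zero]
  | smul a x _ hx => rw [inner_smul_left, hx, mul_zero]

lemma gs_sub_mem {d : ℕ} (f : Fin d → EuclideanSpace ℝ (Fin d)) (i : Fin d) :
    f i - gramSchmidt ℝ f i ∈ (Submodule.span ℝ (f '' Set.Iio i)) := by
  rw [gramSchmidt_def, sub_sub_cancel, ← span_gramSchmidt_Iio]
  refine Submodule.sum_mem _ fun j hj => ?_
  rw [Submodule.starProjection_singleton]
  exact Submodule.smul_mem _ _ (Submodule.subset_span ⟨j, by simpa using hj, rfl⟩)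

lemma gs_norm {d : ℕ} (f : Fin d → EuclideanSpace ℝ (Fin d)) (i : Fin d) :
    ‖gramSchmidt ℝ f i‖ =
      ‖(Submodule.span ℝ (f '' Set.Iio i))ᗮ.orthogonalProjectionOnto (f i)‖ := by
  have : (Submodule.span ℝ (f '' Set.Iio i))ᗮ.starProjection (f i) = gramSchmidt ℝ f i := by
    apply Submodule.eq_starProjection_of_mem_of_inner_eq_zero (gs_mem_orth f i)
    intro w hw
    exact (Submodule.mem_orthogonal _ _).1 hw _ (gs_sub_mem f i)
  rw [← this]
  rfl

lemma gs_inner {d : ℕ} (h : Module.finrank ℝ (EuclideanSpace ℝ (Fin d)) = Fintype.card (Fin d))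
    (f : Fin d → EuclideanSpace ℝ (Fin d)) (i : Fin d) :
    inner ℝ (gramSchmidtOrthonormalBasis h f i) (f i) = ‖gramSchmidt ℝ f i‖ := by
  by_cases hz : gramSchmidtNormed ℝ f i = 0
  · rw [inner_gramSchmidtOrthonormalBasis_eq_zero h hz]
    by_contra hne
    have hg : ‖gramSchmidt ℝ f i‖ ≠ 0 := fun h => hne h.symm
    rw [gramSchmidtNormed, smul_eq_zero] at hz
    rcases hz with hz | hz
    · exact hg (by simpa using hz)
    · exact hg (by simpa using hz)
  · rw [gramSchmidtOrthonormalBasis_apply h hz, gramSchmidtNormed, inner_smul_left]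
    have h0 : inner ℝ (gramSchmidt ℝ f i) (f i) = ‖gramSchmidt ℝ f i‖ ^ 2 := by
      have h1 := (Submodule.mem_orthogonal' _ _).1 (gs_mem_orth f i) _ (gs_sub_mem f i)
      rw [inner_sub_right, real_inner_self_eq_norm_sq] at h1
      linarith
    rw [h0]
    by_cases hg : ‖gramSchmidt ℝ f i‖ = 0
    · simp [hg]
    · simp
      field_simp

def rowf {k d : ℕ} (G : Fin k → Fin d → ℝ) (i : Fin d) : EuclideanSpace ℝ (Fin d) :=
  if h : (i : ℕ) < k then WithLp.toLp 2 (G ⟨i, h⟩) else 0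

lemma rowf_meas {k d : ℕ} (i : Fin d) :
    Measurable (fun G : Fin k → Fin d → ℝ => rowf G i) := by
  unfold rowf
  split_ifs with h
  · fun_prop
  · fun_prop

lemma gs_meas {k d : ℕ} (i : Fin d) :
    Measurable (fun G : Fin k → Fin d → ℝ => gramSchmidt ℝ (rowf G) i) := by
  induction i using WellFoundedLT.induction with
  | ind i ih =>
    have : (fun G : Fin k → Fin d → ℝ => gramSchmidt ℝ (rowf G) i)
      = fun G => rowf G i - ∑ j ∈ Finset.Iio i, (inner ℝ (gramSchmidt ℝ (rowf G) j) (rowf G i) /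
        (‖gramSchmidt ℝ (rowf G) j‖) ^ 2) • gramSchmidt ℝ (rowf G) j := by
      funext G
      rw [gramSchmidt_def]
      simp [Submodule.starProjection_singleton]
    rw [this]
    have hr := rowf_meas (k := k) i
    refine hr.sub (Finset.measurable_fun_sum _ fun j hj => ?_)
    have hj := ih j (by simpa using hj)
    exact ((hj.inner hr).div (hj.norm.pow_const 2)).smul hj

lemma gs_exists_Q {k d : ℕ} (hkd : k ≤ d) (G : Fin k → Fin d → ℝ) :
    ∃ Q : Matrix (Fin d) (Fin d) ℝ, Qᵀ * Q = 1 ∧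
      ∑ i, ∑ j, (G i j - (rectId k d * Q) i j) ^ 2 ≤
        ∑ i, ∑ j, G i j ^ 2 - 2 * ∑ i : Fin k, ‖gramSchmidt ℝ (rowf G) (Fin.castLE hkd i)‖ + k := by
  have h : Module.finrank ℝ (EuclideanSpace ℝ (Fin d)) = Fintype.card (Fin d) := by simp
  set b := gramSchmidtOrthonormalBasis h (rowf G) with hb
  set Q : Matrix (Fin d) (Fin d) ℝ := Matrix.of fun i j => b i j with hQ
  have hQ1 : Q * Qᵀ = 1 := by
    ext i j
    rw [Matrix.mul_apply, Matrix.one_apply]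
    have := b.inner_eq_ite j i
    rw [PiLp.inner_apply] at this
    simp only [hQ, Matrix.transpose_apply, Matrix.of_apply]
    simp only [RCLike.inner_apply, conj_trivial] at this
    rw [this]
    simp [eq_comm]
  refine ⟨Q, mul_eq_one_comm.1 hQ1, le_of_eq ?_⟩
  have hrow : ∀ i j, (rectId k d * Q) i j = b (Fin.castLE hkd i) j := by
    intro i j
    rw [Matrix.mul_apply, Finset.sum_eq_single (Fin.castLE hkd i)]
    · simp [rectId, hQ]
    · intro l _ hl
      have : (i : ℕ) ≠ l := fun h => hl (Fin.ext h.symm)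
      simp [rectId, this]
    · simp
  have hi : ∀ i : Fin k, ∑ j, (G i j - (rectId k d * Q) i j) ^ 2
      = ∑ j, G i j ^ 2 - 2 * ‖gramSchmidt ℝ (rowf G) (Fin.castLE hkd i)‖ + 1 := by
    intro i
    have e1 := gs_inner h (rowf G) (Fin.castLE hkd i)
    have e2 : rowf G (Fin.castLE hkd i) = WithLp.toLp 2 (G i) := by simp [rowf]
    rw [e2, ← hb, PiLp.inner_apply] at e1
    simp only [RCLike.inner_apply, conj_trivial] at e1
    have e3 := b.inner_eq_one (Fin.castLE hkd i)
    rw [PiLp.inner_apply] at e3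
    simp only [RCLike.inner_apply, conj_trivial] at e3
    rw [← e1, ← e3, Finset.mul_sum, ← Finset.sum_sub_distrib, ← Finset.sum_add_distrib]
    refine Finset.sum_congr rfl fun j _ => ?_
    rw [hrow]
    ring
  simp_rw [hi, Finset.sum_add_distrib, Finset.sum_sub_distrib, Finset.mul_sum]
  simp

end gs

lemma pi_lower {α : Type*} [MeasurableSpace α] {μ : Measure α} [IsProbabilityMeasure μ] {k : ℕ}
    (i : Fin k) {F : (Fin k → α) → ℝ} (hF : Integrable F (Measure.pi fun _ : Fin k => μ)) {c : ℝ}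
    (h : ∀ G, c ≤ ∫ x, F (Function.update G i x) ∂μ) :
    c ≤ ∫ G, F G ∂(Measure.pi fun _ : Fin k => μ) := by
  obtain ⟨p, rfl⟩ : ∃ p, k = p + 1 := ⟨k - 1, by have := i.2; omega⟩
  have mp := (measurePreserving_piFinSuccAbove (fun _ : Fin (p+1) => μ) i).symm
  have hF' := (mp.integrable_comp_emb (MeasurableEquiv.measurableEmbedding _)).2 hF
  rw [← mp.integral_comp (MeasurableEquiv.measurableEmbedding _)]
  have e : ∀ z : α × (Fin p → α), F ((MeasurableEquiv.piFinSuccAbove (fun _ => α) i).symm z)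
      = F (i.insertNth z.1 z.2) := fun z => rfl
  have hF2 : Integrable (fun z : α × (Fin p → α) => F (i.insertNth z.1 z.2))
    (μ.prod (Measure.pi fun _ : Fin p => μ)) := hF'
  change c ≤ ∫ z : α × (Fin p → α), F (i.insertNth z.1 z.2) ∂(μ.prod (Measure.pi fun _ : Fin p => μ))
  rw [integral_prod_symm _ hF2]
  have hc : c = ∫ _y : Fin p → α, c ∂(Measure.pi fun _ : Fin p => μ) := by simp
  rw [hc]
  apply integral_mono (integrable_const _) hF2.integral_prod_right
  intro y
  by_cases hne : Nonempty α
  · obtain ⟨a⟩ := hne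
    refine (h (i.insertNth a y)).trans (le_of_eq ?_)
    simp
  · exact absurd (μ.nonempty_of_neZero) hne

/-! Part 7: expectations -/

lemma gaussMeasure_eq (k d : ℕ) : gaussMeasure k d = Measure.pi fun _ : Fin k => rowM d := rfl

instance (k d : ℕ) : IsProbabilityMeasure (gaussMeasure k d) := by
  rw [gaussMeasure_eq]; infer_instance

lemma entry_mp {k d : ℕ} (i : Fin k) (j : Fin d) :
    MeasurePreserving (fun G : Fin k → Fin d → ℝ => G i j) (gaussMeasure k d)
      (gaussianReal 0 (d : NNReal)⁻¹) := by
  have h1 := measurePreserving_eval (fun _ : Fin k => rowM d) i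
  have h2 := measurePreserving_eval (fun _ : Fin d => gaussianReal 0 (d : NNReal)⁻¹) j
  exact h2.comp h1

lemma gauss_sq_integrable (v : NNReal) : Integrable (fun x : ℝ => x ^ 2) (gaussianReal 0 v) :=
  (memLp_id_gaussianReal (μ := 0) (v := v) 2).integrable_sq

lemma gauss_sq_mean (v : NNReal) : ∫ x, x ^ 2 ∂(gaussianReal 0 v) = v := by
  have h := variance_fun_id_gaussianReal (μ := 0) (v := v)
  rw [variance_of_integral_eq_zero (by fun_prop) (by simp)] at h
  exact h

lemma entry_sq_integrable {k d : ℕ} (i : Fin k) (j : Fin d) :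
    Integrable (fun G : Fin k → Fin d → ℝ => G i j ^ 2) (gaussMeasure k d) :=
  (entry_mp i j).integrable_comp_of_integrable (gauss_sq_integrable _)

lemma entry_sq_mean {k d : ℕ} (i : Fin k) (j : Fin d) :
    ∫ G, G i j ^ 2 ∂(gaussMeasure k d) = (d : ℝ)⁻¹ := by
  have h := integral_map (μ := gaussMeasure k d) (φ := fun G : Fin k → Fin d → ℝ => G i j)
    (entry_mp i j).measurable.aemeasurable (f := fun x : ℝ => x ^ 2) (by fun_prop)
  rw [← h, (entry_mp i j).map_eq, gauss_sq_mean]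
  simp

def sqsum {k d : ℕ} (G : Fin k → Fin d → ℝ) : ℝ := ∑ i, ∑ j, G i j ^ 2

lemma sqsum_integrable {k d : ℕ} :
    Integrable (fun G : Fin k → Fin d → ℝ => sqsum G) (gaussMeasure k d) :=
  integrable_finsetSum _ fun i _ => integrable_finsetSum _ fun j _ => entry_sq_integrable i j

lemma sqsum_mean {k d : ℕ} (hd : 0 < d) :
    ∫ G : Fin k → Fin d → ℝ, sqsum G ∂(gaussMeasure k d) = k := by
  unfold sqsum
  rw [integral_finsetSum _ fun i _ => integrable_finsetSum _ fun j _ => entry_sq_integrable i j]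
  have : ∀ i : Fin k, ∫ G : Fin k → Fin d → ℝ, ∑ j, G i j ^ 2 ∂(gaussMeasure k d) = 1 := by
    intro i
    rw [integral_finsetSum _ fun j _ => entry_sq_integrable i j]
    simp only [entry_sq_mean]
    have : (d:ℝ) ≠ 0 := by positivity
    simp [this]
  simp [this]

open InnerProductSpace in
lemma gs_integrable {k d : ℕ} (hkd : k ≤ d) (i : Fin k) :
    Integrable (fun G : Fin k → Fin d → ℝ => ‖gramSchmidt ℝ (rowf G) (Fin.castLE hkd i)‖)
      (gaussMeasure k d) := by
  refine ((integrable_const (1:ℝ)).add (sqsum_integrable (k := k) (d := d))).mono'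
    (gs_meas _).norm.aestronglyMeasurable (Filter.Eventually.of_forall fun G => ?_)
  rw [norm_norm, gs_norm]
  have e2 : rowf G (Fin.castLE hkd i) = WithLp.toLp 2 (G i) := by simp [rowf]
  have h1 := Submodule.norm_orthogonalProjectionOnto_apply_le
    (Submodule.span ℝ (rowf G '' Set.Iio (Fin.castLE hkd i)))ᗮ (rowf G (Fin.castLE hkd i))
  refine h1.trans ?_
  have h2 : ‖rowf G (Fin.castLE hkd i)‖ ^ 2 ≤ sqsum G := by
    rw [e2, EuclideanSpace.real_norm_sq_eq]
    exact Finset.single_le_sum (f := fun i => ∑ j, G i j ^ 2)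
      (fun i _ => Finset.sum_nonneg fun j _ => sq_nonneg _) (Finset.mem_univ i)
  simp only [Pi.add_apply]
  nlinarith [sq_nonneg (‖rowf G (Fin.castLE hkd i)‖ - 1), norm_nonneg (rowf G (Fin.castLE hkd i))]

open InnerProductSpace in
lemma gs_mean {k d : ℕ} (hkd : k ≤ d) (i : Fin k) :
    ((d:ℝ) - (i : ℕ) - 1/2) / d ≤
      ∫ G : Fin k → Fin d → ℝ, ‖gramSchmidt ℝ (rowf G) (Fin.castLE hkd i)‖ ∂(gaussMeasure k d) := by
  have hI := gs_integrable hkd i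
  rw [gaussMeasure_eq] at hI ⊢
  refine pi_lower i hI fun G => ?_
  set W := Submodule.span ℝ (rowf G '' Set.Iio (Fin.castLE hkd i)) with hW
  have hx : ∀ x, ‖gramSchmidt ℝ (rowf (Function.update G i x)) (Fin.castLE hkd i)‖
      = ‖Wᗮ.orthogonalProjectionOnto (WithLp.toLp 2 x)‖ := by
    intro x
    rw [gs_norm]
    have e1 : rowf (Function.update G i x) (Fin.castLE hkd i) = WithLp.toLp 2 x := by
      simp [rowf]
    have e2 : rowf (Function.update G i x) '' Set.Iio (Fin.castLE hkd i)
        = rowf G '' Set.Iio (Fin.castLE hkd i) := by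
      refine Set.image_congr fun j hj => ?_
      unfold rowf
      split_ifs with h
      · rw [Function.update_of_ne]
        intro he
        rw [← he] at hj
        exact lt_irrefl _ (show (j:ℕ) < j from hj)
      · rfl
    rw [e1, e2]
  simp_rw [hx]
  have hf : Module.finrank ℝ W ≤ (i : ℕ) := by
    have hs : W = Submodule.span ℝ
        (((Finset.Iio (Fin.castLE hkd i)).image (rowf G) : Finset _) : Set _) := by
      rw [hW]; simp
    rw [hs]
    refine (finrank_span_finset_le_card _).trans (Finset.card_image_le.trans ?_)
    simp
  have hadd := Submodule.finrank_add_finrank_orthogonal W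
  rw [finrank_euclideanSpace, Fintype.card_fin] at hadd
  have hi : (i:ℕ) < d := i.2.trans_le hkd
  refine le_trans ?_ (row_proj_mean Wᗮ (by omega))
  have : (d:ℝ) - (i:ℕ) ≤ (Module.finrank ℝ Wᗮ : ℝ) := by
    have : d ≤ Module.finrank ℝ Wᗮ + i := by omega
    have : (d:ℝ) ≤ (Module.finrank ℝ Wᗮ : ℝ) + (i:ℕ) := by exact_mod_cast this
    linarith
  gcongr

/-! Part 8: the distance function -/

def vecE {k d : ℕ} (M : Fin k → Fin d → ℝ) : EuclideanSpace ℝ (Fin k × Fin d) :=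
  WithLp.toLp 2 fun p => M p.1 p.2

def orthSet (k d : ℕ) : Set (EuclideanSpace ℝ (Fin k × Fin d)) :=
  (fun Q : Matrix (Fin d) (Fin d) ℝ => vecE (rectId k d * Q)) '' {Q | Qᵀ * Q = 1}

def dF {k d : ℕ} (G : Fin k → Fin d → ℝ) : ℝ := Metric.infDist (vecE G) (orthSet k d)

lemma vecE_dist {k d : ℕ} (A B : Fin k → Fin d → ℝ) : dist (vecE A) (vecE B) = √(sqsum fun i j => A i j - B i j) := by
  rw [EuclideanSpace.dist_eq]
  simp [vecE, sqsum, Fintype.sum_prod_type, Real.dist_eq, sq_abs]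

lemma vecE_cont {k d : ℕ} : Continuous (vecE : (Fin k → Fin d → ℝ) → _) := by
  unfold vecE; fun_prop

lemma orthSet_nonempty (k d : ℕ) : (orthSet k d).Nonempty := ⟨_, 1, by simp, rfl⟩

lemma orthSet_compact (k d : ℕ) : IsCompact (orthSet k d) := by
  refine IsCompact.image ?_ ?_
  · have hcl : IsClosed {Q : Matrix (Fin d) (Fin d) ℝ | Qᵀ * Q = 1} :=
      isClosed_eq (by fun_prop) continuous_const
    have hsub : {Q : Matrix (Fin d) (Fin d) ℝ | Qᵀ * Q = 1} ⊆
        Set.pi Set.univ (fun _ : Fin d => Set.pi Set.univ fun _ : Fin d => Set.Icc (-1:ℝ) 1) := by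
      intro Q hQ i _ j _
      have h := congrFun (congrFun hQ j) j
      rw [Matrix.mul_apply, Matrix.one_apply_eq] at h
      have h2 : Q i j * Q i j ≤ 1 := by
        rw [← h]
        exact Finset.single_le_sum (f := fun l => Qᵀ j l * Q l j)
          (fun l _ => mul_self_nonneg _) (Finset.mem_univ i)
      exact abs_le.1 (abs_le_one_iff_mul_self_le_one.2 h2)
    exact (isCompact_univ_pi fun _ => isCompact_univ_pi fun _ => isCompact_Icc).of_isClosed_subset
      hcl hsub
  · exact vecE_cont.comp (by fun_prop : Continuous fun Q : Matrix (Fin d) (Fin d) ℝ => rectId k d * Q)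

lemma dF_nonneg {k d : ℕ} (G : Fin k → Fin d → ℝ) : 0 ≤ dF G := Metric.infDist_nonneg

lemma dF_meas {k d : ℕ} : Measurable (dF : (Fin k → Fin d → ℝ) → ℝ) := by
  have h : Continuous (fun G : Fin k → Fin d → ℝ => Metric.infDist (vecE G) (orthSet k d)) :=
    (Metric.continuous_infDist_pt (orthSet k d)).comp vecE_cont
  exact h.measurable

lemma dF_lip {k d : ℕ} (x y : Fin k → Fin d → ℝ) : dF x ≤ dF y + √(sqsum (x - y)) := by
  have h : dist (vecE x) (vecE y) = √(sqsum (x - y)) := vecE_dist x y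
  rw [← h]
  exact Metric.infDist_le_infDist_add_dist

lemma dF_attain {k d : ℕ} (G : Fin k → Fin d → ℝ) :
    ∃ Q : Matrix (Fin d) (Fin d) ℝ, Qᵀ * Q = 1 ∧ dF G = √(sqsum fun i j => G i j - (rectId k d * Q) i j) := by
  obtain ⟨y, ⟨Q, hQ, rfl⟩, h⟩ := (orthSet_compact k d).exists_infDist_eq_dist
    (orthSet_nonempty k d) (vecE G)
  exact ⟨Q, hQ, by rw [dF, h]; exact vecE_dist _ _⟩

lemma sqsum_nonneg {k d : ℕ} (G : Fin k → Fin d → ℝ) : 0 ≤ sqsum G :=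
  Finset.sum_nonneg fun _ _ => Finset.sum_nonneg fun _ _ => sq_nonneg _

open InnerProductSpace in
lemma dF_sq_le {k d : ℕ} (hkd : k ≤ d) (G : Fin k → Fin d → ℝ) :
    dF G ^ 2 ≤ sqsum G -
      2 * ∑ i : Fin k, ‖gramSchmidt ℝ (rowf G) (Fin.castLE hkd i)‖ + k := by
  obtain ⟨Q, hQ, h⟩ := gs_exists_Q hkd G
  have h1 : dF G ≤ √(sqsum fun i j => G i j - (rectId k d * Q) i j) := by
    have hm : vecE (rectId k d * Q) ∈ orthSet k d := ⟨Q, hQ, rfl⟩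
    exact (Metric.infDist_le_dist_of_mem hm).trans (vecE_dist _ _).le
  calc dF G ^ 2 ≤ √(sqsum fun i j => G i j - (rectId k d * Q) i j) ^ 2 := pow_le_pow_left₀ (dF_nonneg G) h1 2
    _ = sqsum (fun i j => G i j - (rectId k d * Q) i j) := Real.sq_sqrt (sqsum_nonneg _)
    _ ≤ _ := h

open InnerProductSpace in
lemma dF_mean {k d : ℕ} (hk : 0 < k) (hkd : k ≤ d) :
    Integrable (dF : (Fin k → Fin d → ℝ) → ℝ) (gaussMeasure k d) ∧
      ∫ G : Fin k → Fin d → ℝ, dF G ∂(gaussMeasure k d) ≤ k / √d := by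
  have hd : 0 < d := hk.trans_le hkd
  have hd' : (0:ℝ) < d := by exact_mod_cast hd
  have hk' : (0:ℝ) < k := by exact_mod_cast hk
  have hsd : 0 < √(d:ℝ) := Real.sqrt_pos.2 hd'
  set c : ℝ := k / √d with hc
  have hc0 : 0 < c := by positivity
  set B : (Fin k → Fin d → ℝ) → ℝ := fun G => sqsum G -
      2 * ∑ i : Fin k, ‖gramSchmidt ℝ (rowf G) (Fin.castLE hkd i)‖ + k with hB
  have iS : Integrable (fun G : Fin k → Fin d → ℝ =>
      ∑ i : Fin k, ‖gramSchmidt ℝ (rowf G) (Fin.castLE hkd i)‖) (gaussMeasure k d) :=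
    integrable_finsetSum _ fun i _ => gs_integrable hkd i
  have iS2 := iS.const_mul 2
  have iB1 := (sqsum_integrable (k := k) (d := d)).sub iS2
  have iB1' : Integrable (fun G : Fin k → Fin d → ℝ => sqsum G -
      2 * ∑ i : Fin k, ‖gramSchmidt ℝ (rowf G) (Fin.castLE hkd i)‖) (gaussMeasure k d) := iB1
  have iB : Integrable B (gaussMeasure k d) := iB1.add (integrable_const _)
  have hpt : ∀ G, dF G ≤ (B G / c + c) / 2 := by
    intro G
    have h := dF_sq_le hkd G
    have h2 : B G / c + c = (B G + c ^ 2) / c := by field_simp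
    rw [h2, div_div, le_div_iff₀ (by positivity)]
    have : dF G ^ 2 ≤ B G := h
    nlinarith [sq_nonneg (dF G - c)]
  have iB2 : Integrable (fun G => (B G / c + c) / 2) (gaussMeasure k d) :=
    ((iB.div_const c).add (integrable_const c)).div_const 2
  have iF : Integrable (dF : (Fin k → Fin d → ℝ) → ℝ) (gaussMeasure k d) := by
    refine iB2.mono' dF_meas.aestronglyMeasurable (Filter.Eventually.of_forall fun G => ?_)
    rw [Real.norm_eq_abs, abs_of_nonneg (dF_nonneg G)]
    exact hpt G
  refine ⟨iF, ?_⟩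
  have hBint : ∫ G, B G ∂(gaussMeasure k d) ≤ c ^ 2 := by
    have e : ∫ G, B G ∂(gaussMeasure k d) = k - 2 * ∑ i : Fin k,
        ∫ G : Fin k → Fin d → ℝ, ‖gramSchmidt ℝ (rowf G) (Fin.castLE hkd i)‖ ∂(gaussMeasure k d)
        + k := by
      have e0 : ∫ G, B G ∂(gaussMeasure k d) = ∫ G, (sqsum G -
          2 * ∑ i : Fin k, ‖gramSchmidt ℝ (rowf G) (Fin.castLE hkd i)‖) + (k:ℝ)
            ∂(gaussMeasure k d) := rfl
      rw [e0, integral_add iB1' (integrable_const _), integral_sub sqsum_integrable iS2,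
        integral_const_mul, integral_finsetSum _ fun i _ => gs_integrable hkd i, sqsum_mean hd]
      simp
    have hsum : (k:ℝ) - k ^ 2 / (2 * d) ≤ ∑ i : Fin k,
        ∫ G : Fin k → Fin d → ℝ, ‖gramSchmidt ℝ (rowf G) (Fin.castLE hkd i)‖
          ∂(gaussMeasure k d) := by
      refine le_trans (le_of_eq ?_) (Finset.sum_le_sum fun i _ => gs_mean hkd i)
      rw [Fin.sum_univ_eq_sum_range (fun i : ℕ => ((d:ℝ) - (i : ℕ) - 1/2) / d) k]
      have : ∀ n : ℕ, ∑ i ∈ Finset.range n, ((d:ℝ) - (i : ℕ) - 1/2) / d = n - n ^ 2 / (2 * d) := by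
        intro n
        induction n with
        | zero => simp
        | succ n ih =>
          rw [Finset.sum_range_succ, ih]
          push_cast
          field_simp
          ring
      exact (this k).symm
    have hc2 : c ^ 2 = k ^ 2 / d := by rw [hc, div_pow, Real.sq_sqrt hd'.le]
    rw [e, hc2]
    have : (k:ℝ) ^ 2 / d = 2 * (k ^ 2 / (2 * d)) := by field_simp
    rw [this]
    linarith
  calc ∫ G : Fin k → Fin d → ℝ, dF G ∂(gaussMeasure k d)
      ≤ ∫ G, (B G / c + c) / 2 ∂(gaussMeasure k d) := integral_mono iF iB2 hpt
    _ = ((∫ G, B G ∂(gaussMeasure k d)) / c + c) / 2 := by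
        rw [integral_div, integral_add (iB.div_const c) (integrable_const c), integral_div]
        simp
    _ ≤ (c ^ 2 / c + c) / 2 := by gcongr
    _ = c := by field_simp; ring

/-! Part 9: rotation invariance -/

lemma gauss_cf {n d : ℕ} (a : Fin n → Fin d → ℝ) :
    ∫ R : Fin n → Fin d → ℝ, Complex.exp (((∑ i, ∑ j, a i j * R i j : ℝ) : ℂ) * Complex.I)
      ∂(gaussMeasure n d) = Complex.exp (-((d:ℝ)⁻¹ * sqsum a / 2 : ℝ)) := by
  have h1 : ∀ R : Fin n → Fin d → ℝ,
      Complex.exp (((∑ i, ∑ j, a i j * R i j : ℝ) : ℂ) * Complex.I)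
      = ∏ i, ∏ j, Complex.exp ((a i j * R i j : ℝ) * Complex.I) := by
    intro R
    simp_rw [← Complex.exp_sum]
    congr 1
    push_cast
    simp_rw [Finset.sum_mul]
  simp_rw [h1]
  rw [gaussMeasure_eq,
    integral_fintype_prod_eq_prod (fun (i : Fin n) (x : Fin d → ℝ) =>
      ∏ j, Complex.exp ((a i j * x j : ℝ) * Complex.I))]
  have h2 : ∀ i, ∫ x : Fin d → ℝ, ∏ j, Complex.exp ((a i j * x j : ℝ) * Complex.I) ∂(rowM d)
      = ∏ j, Complex.exp (-((d:ℝ)⁻¹ * a i j ^ 2 / 2 : ℝ)) := by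
    intro i
    rw [rowM, integral_fintype_prod_eq_prod (fun (j : Fin d) (x : ℝ) =>
      Complex.exp ((a i j * x : ℝ) * Complex.I))]
    refine Finset.prod_congr rfl fun j _ => ?_
    have := charFun_gaussianReal (μ := 0) (v := (d : NNReal)⁻¹) (a i j)
    rw [charFun_apply_real] at this
    push_cast at this ⊢
    rw [this]
    congr 1
    ring
  simp_rw [h2, ← Complex.exp_sum]
  congr 1
  unfold sqsum
  push_cast
  simp only [Finset.mul_sum, Finset.sum_div, ← Finset.sum_neg_distrib]

lemma sqsum_trace {n d : ℕ} (M : Matrix (Fin n) (Fin d) ℝ) : sqsum M = (Mᵀ * M).trace := by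
  simp only [sqsum, Matrix.trace, Matrix.diag, Matrix.mul_apply, Matrix.transpose_apply]
  rw [Finset.sum_comm]
  simp only [sq]

lemma sqsum_mul {n k d : ℕ} {Φ : Matrix (Fin n) (Fin k) ℝ} (h : Φᵀ * Φ = 1)
    (M : Matrix (Fin k) (Fin d) ℝ) : sqsum (Φ * M) = sqsum M := by
  have e1 := sqsum_trace (Φ * M)
  have e2 := sqsum_trace M
  refine e1.trans (Eq.trans ?_ e2.symm)
  rw [Matrix.transpose_mul, Matrix.mul_assoc, ← Matrix.mul_assoc Φᵀ, h, Matrix.one_mul]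

def mulL {n k : ℕ} (d : ℕ) (Φ : Matrix (Fin n) (Fin k) ℝ) (R : Fin n → Fin d → ℝ) :
    Fin k → Fin d → ℝ := fun l j => ∑ i, Φ i l * R i j

lemma mulL_meas {n k d : ℕ} (Φ : Matrix (Fin n) (Fin k) ℝ) : Measurable (mulL d Φ) := by
  unfold mulL; fun_prop

lemma dual_expand {k d : ℕ} (L : StrongDual ℝ (Fin k → Fin d → ℝ)) :
    ∃ b : Fin k → Fin d → ℝ, ∀ G, L G = ∑ i, ∑ j, b i j * G i j := by
  refine ⟨fun i j => L (Pi.single i (Pi.single j 1)), fun G => ?_⟩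
  have : G = ∑ i, ∑ j, G i j • (Pi.single i (Pi.single j (1:ℝ)) : Fin k → Fin d → ℝ) := by
    funext l m
    simp only [Finset.sum_apply, Pi.smul_apply, smul_eq_mul]
    rw [Finset.sum_eq_single l, Finset.sum_eq_single m]
    · simp
    · intro b _ hb
      simp [Pi.single_apply, hb.symm]
    · simp
    · intro b _ hb
      simp [Pi.single_apply, hb.symm]
    · simp
  conv_lhs => rw [this]
  simp only [map_sum, map_smul, smul_eq_mul]
  exact Finset.sum_congr rfl fun i _ => Finset.sum_congr rfl fun j _ => mul_comm _ _

lemma gauss_push {n k d : ℕ} {Φ : Matrix (Fin n) (Fin k) ℝ} (h : Φᵀ * Φ = 1) :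
    (gaussMeasure n d).map (mulL d Φ) = gaussMeasure k d := by
  have : IsProbabilityMeasure ((gaussMeasure n d).map (mulL d Φ)) :=
    Measure.isProbabilityMeasure_map (mulL_meas Φ).aemeasurable
  apply Measure.ext_of_charFunDual
  ext L
  obtain ⟨b, hb⟩ := dual_expand L
  rw [charFunDual_apply, charFunDual_apply, integral_map (mulL_meas Φ).aemeasurable (by fun_prop)]
  simp_rw [hb]
  rw [gauss_cf]
  have e : ∀ R : Fin n → Fin d → ℝ, ∑ l, ∑ j, b l j * mulL d Φ R l j
      = ∑ i, ∑ j, (Φ * (Matrix.of b)) i j * R i j := by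
    intro R
    simp only [mulL, Matrix.mul_apply, Matrix.of_apply, Finset.mul_sum, Finset.sum_mul]
    rw [Finset.sum_congr rfl fun l _ => Finset.sum_comm, Finset.sum_comm]
    refine Finset.sum_congr rfl fun i _ => ?_
    rw [Finset.sum_comm]
    exact Finset.sum_congr rfl fun j _ => Finset.sum_congr rfl fun l _ => by ring
  simp_rw [e]
  rw [gauss_cf (fun i j => (Φ * (Matrix.of b)) i j)]
  have : sqsum (fun i j => (Φ * (Matrix.of b)) i j) = sqsum b := sqsum_mul h (Matrix.of b)
  rw [this]

lemma rect_orth {n k : ℕ} (hnk : k ≤ n) : (rectId n k)ᵀ * rectId n k = 1 := by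
  ext i j
  rw [Matrix.mul_apply, Finset.sum_eq_single (Fin.castLE hnk i)]
  · simp [rectId, Matrix.one_apply, Fin.ext_iff]
  · intro l _ hl
    have : (l : ℕ) ≠ i := fun h => hl (Fin.ext h)
    simp [rectId, this]
  · simp

lemma main_tail {k d : ℕ} (hk : 0 < k) (hkd : k ≤ d) {t : ℝ} (ht : 0 ≤ t) :
    (gaussMeasure k d).real {G | √((k:ℝ) / d) * (√k + t) < dF G} ≤ Real.exp (-t ^ 2 / 2) := by
  have hd : 0 < d := hk.trans_le hkd
  have hd' : (0:ℝ) < d := by exact_mod_cast hd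
  have hk' : (1:ℝ) ≤ k := by exact_mod_cast hk
  have hsd : 0 < √(d:ℝ) := Real.sqrt_pos.2 hd'
  obtain ⟨Fi, hm⟩ := dF_mean hk hkd
  have H : ∀ t s : ℝ, 0 < t → 0 < s → t + s = 1 →
      PLP t s (gaussMeasure k d) (fun x => t * s / (2 * (d:ℝ)⁻¹) * sqsum x) := by
    intro t s ht hs hts
    have h := plp_pi (plp_pi (plp_gauss (v := (d : NNReal)⁻¹) (by positivity) ht hs hts) d) k
    have e : (fun x : Fin k → Fin d → ℝ => t * s / (2 * (d:ℝ)⁻¹) * sqsum x) =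
        fun x => ∑ i, ∑ j, t * s / (2 * (((d : NNReal)⁻¹ : NNReal) : ℝ)) * (x i j) ^ 2 := by
      funext x
      simp only [sqsum, Finset.mul_sum]
      push_cast
      rfl
    rw [e]
    exact h
  have h := conc_tail (v := (d:ℝ)⁻¹) (by positivity) (μ := gaussMeasure k d) (q := sqsum)
    sqsum_nonneg
    (by
      intro r x
      simp only [sqsum, Pi.smul_apply, smul_eq_mul, mul_pow, Finset.mul_sum]) H
    dF_meas dF_nonneg dF_lip Fi hm (by positivity)
    (u := √k * t / √d) (by positivity)
  have e : √((k:ℝ) / d) * (√k + t) = k / √d + √k * t / √d := by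
    rw [Real.sqrt_div (by positivity)]
    have := Real.mul_self_sqrt (show (0:ℝ) ≤ k by positivity)
    field_simp
    nlinarith
  rw [e]
  refine h.trans (Real.exp_le_exp.2 ?_)
  have e2 : -(√k * t / √d) ^ 2 / (2 * (d:ℝ)⁻¹) = -(k * t ^ 2) / 2 := by
    rw [div_pow, mul_pow, Real.sq_sqrt (by positivity), Real.sq_sqrt (by positivity)]
    field_simp
  rw [e2]
  nlinarith [sq_nonneg t]

/-- for Gaussian `R` with i.i.d. `N(0, 1/d)` entries, with probability at least
`1 − exp(−t²/2)` there is an orthogonal `Q` with `‖Ψ − Φ I_{k×d} Q‖_F ≤ √(k/d)(√k + t)`. -/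
theorem statement5 {n k d : ℕ} (hnk : k ≤ n) (hkd : k ≤ d) (t : ℝ) (ht : 0 ≤ t)
    (U : Matrix (Fin n) (Fin n) ℝ) (hU : Uᵀ * U = 1)
    (Φ : Matrix (Fin n) (Fin k) ℝ) (hΦ : Φ = U * rectId n k) :
    ENNReal.ofReal (1 - Real.exp (-t ^ 2 / 2)) ≤
      gaussMeasure n d {R | ∃ Q : Matrix (Fin d) (Fin d) ℝ, Qᵀ * Q = 1 ∧
        frob (Φ * Φᵀ * Matrix.of R - Φ * rectId k d * Q) ≤
          Real.sqrt ((k : ℝ) / d) * (Real.sqrt k + t)} := by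
  have hΦ1 : Φᵀ * Φ = 1 := by
    rw [hΦ, Matrix.transpose_mul, Matrix.mul_assoc, ← Matrix.mul_assoc Uᵀ, hU, Matrix.one_mul,
      rect_orth hnk]
  have hfrob : ∀ (R : Fin n → Fin d → ℝ) (Q : Matrix (Fin d) (Fin d) ℝ),
      frob (Φ * Φᵀ * Matrix.of R - Φ * rectId k d * Q)
        = √(sqsum fun i j => mulL d Φ R i j - (rectId k d * Q) i j) := by
    intro R Q
    have e : Φ * Φᵀ * Matrix.of R - Φ * rectId k d * Q
        = Φ * (Φᵀ * Matrix.of R - rectId k d * Q) := by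
      rw [Matrix.mul_sub, Matrix.mul_assoc, Matrix.mul_assoc]
    have e2 := sqsum_mul hΦ1 (Φᵀ * Matrix.of R - rectId k d * Q)
    rw [e]
    unfold frob
    congr 1
  rcases Nat.eq_zero_or_pos k with hk | hk
  · subst hk
    have : {R : Fin n → Fin d → ℝ | ∃ Q : Matrix (Fin d) (Fin d) ℝ, Qᵀ * Q = 1 ∧
        frob (Φ * Φᵀ * Matrix.of R - Φ * rectId 0 d * Q) ≤
          Real.sqrt (((0:ℕ) : ℝ) / d) * (Real.sqrt ((0:ℕ):ℝ) + t)} = Set.univ := by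
      refine Set.eq_univ_of_forall fun R => ⟨1, by simp, ?_⟩
      rw [hfrob]
      simp [sqsum]
    rw [this, measure_univ, ENNReal.ofReal_le_one]
    have := Real.exp_pos (-t ^ 2 / 2)
    linarith
  · set a := √((k:ℝ) / d) * (√k + t) with ha
    have hsub : mulL d Φ ⁻¹' {G | dF G ≤ a} ⊆ {R : Fin n → Fin d → ℝ |
        ∃ Q : Matrix (Fin d) (Fin d) ℝ, Qᵀ * Q = 1 ∧
        frob (Φ * Φᵀ * Matrix.of R - Φ * rectId k d * Q) ≤ a} := by
      intro R hR
      obtain ⟨Q, hQ, h⟩ := dF_attain (mulL d Φ R)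
      refine ⟨Q, hQ, ?_⟩
      rw [hfrob, ← h]
      exact hR
    refine le_trans ?_ (measure_mono hsub)
    have hms : MeasurableSet {G : Fin k → Fin d → ℝ | dF G ≤ a} :=
      measurableSet_le dF_meas measurable_const
    rw [← Measure.map_apply (mulL_meas Φ) hms, gauss_push hΦ1]
    have hc : {G : Fin k → Fin d → ℝ | dF G ≤ a} = {G | a < dF G}ᶜ := by
      ext G; simp
    have hms' : MeasurableSet {G : Fin k → Fin d → ℝ | a < dF G} :=
      measurableSet_lt measurable_const dF_meas
    have h := main_tail hk hkd ht
    refine ENNReal.ofReal_le_of_le_toReal ?_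
    change _ ≤ (gaussMeasure k d).real {G : Fin k → Fin d → ℝ | dF G ≤ a}
    rw [hc, probReal_compl_eq_one_sub hms']
    linarith
end
end
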